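/- arXiv:2207.01235 — 3 statements merged into one kernel-verified Lean document; each statement's English description precedes it below -/
import Mathlib

section
/- Let d ≥ 1 and let μ, ν be Borel probability measures on ℝ^d with finite second moments. If μ and ν are in convex order (μ ≼_c ν), then W₂(μ,ν)² ≤ ∫|y|² dν(y) − ∫|x|² dμ(x). -/
open MeasureTheory Metric

noncomputable section

/-- The set of couplings of two measures on `ℝ^d`. -/
def Couplings {d : ℕ} (α β : Measure (EuclideanSpace ℝ (Fin d))) :
    Set (Measure (EuclideanSpace ℝ (Fin d) × EuclideanSpace ℝ (Fin d))) :=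
  {π | π.map Prod.fst = α ∧ π.map Prod.snd = β}

/-- The squared 2-Wasserstein distance `W₂(α,β)² = inf_{π ∈ Π(α,β)} ∫ |x-y|² dπ`. -/
def W2sq {d : ℕ} (α β : Measure (EuclideanSpace ℝ (Fin d))) : ℝ :=
  sInf {r : ℝ | ∃ π ∈ Couplings α β, r = ∫ p, ‖p.1 - p.2‖ ^ 2 ∂π}

/-- Convex order: `∫ f dμ ≤ ∫ f dν` for all convex `f` integrable w.r.t. both. -/
def ConvexOrder {d : ℕ} (μ ν : Measure (EuclideanSpace ℝ (Fin d))) : Prop :=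
  ∀ f : EuclideanSpace ℝ (Fin d) → ℝ, ConvexOn ℝ Set.univ f →
    Integrable f μ → Integrable f ν → ∫ x, f x ∂μ ≤ ∫ x, f x ∂ν


local notation "EE" d => EuclideanSpace ℝ (Fin d)

theorem integrable_id_of_sq {d : ℕ} (μ : Measure (EE d)) [IsFiniteMeasure μ]
    (hμ : Integrable (fun x => ‖x‖ ^ 2) μ) : Integrable (fun x : EE d => x) μ := by
  have h2 : MemLp (fun x : EE d => x) 2 μ :=
    (memLp_two_iff_integrable_sq_norm (by fun_prop)).2 hμ
  exact h2.integrable (by norm_num)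

theorem coupling_bound {d : ℕ} (μ ν : Measure (EE d))
    [IsProbabilityMeasure μ] [IsProbabilityMeasure ν]
    (hμ : Integrable (fun x => ‖x‖ ^ 2) μ) (hν : Integrable (fun y => ‖y‖ ^ 2) ν)
    {ι : Type} [Fintype ι] (m : ι → Measure (EE d)) [∀ i, IsFiniteMeasure (m i)]
    (hm0 : ∀ i, m i ≠ 0) (hm : ∑ i, m i = μ)
    (g : ι → (EE d) → ℝ) (hg : ∀ i, Measurable (g i)) (hg0 : ∀ i y, 0 ≤ g i y)
    (hg1 : ∀ y, ∑ i, g i y = 1) (hgm : ∀ i, ∫ y, g i y ∂ν = (m i).real Set.univ) :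
    W2sq μ ν ≤ ∫ x, ‖x‖ ^ 2 ∂μ + ∫ y, ‖y‖ ^ 2 ∂ν
      - 2 * ∑ i, ((m i).real Set.univ)⁻¹ * inner ℝ (∫ x, x ∂(m i)) (∫ y, g i y • y ∂ν) := by
  have hgle : ∀ i y, g i y ≤ 1 := fun i y => by
    rw [← hg1 y]
    exact Finset.single_le_sum (f := fun i => g i y) (fun j _ => hg0 j y) (Finset.mem_univ i)
  have hgint : ∀ i, Integrable (g i) ν := fun i =>
    Integrable.of_bound (hg i).aestronglyMeasurable 1
      (Filter.Eventually.of_forall fun y => by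
        rw [Real.norm_of_nonneg (hg0 i y)]; exact hgle i y)
  set n : ι → Measure (EE d) := fun i => ν.withDensity (fun y => ENNReal.ofReal (g i y)) with hn
  have hnu : ∀ i, n i Set.univ = m i Set.univ := by
    intro i
    simp only [hn]
    rw [withDensity_apply _ MeasurableSet.univ, Measure.restrict_univ,
      ← ofReal_integral_eq_lintegral_ofReal (hgint i) (Filter.Eventually.of_forall (hg0 i)), hgm i,
      ofReal_measureReal]
  have : ∀ i, IsFiniteMeasure (n i) := fun i => ⟨by rw [hnu i]; exact measure_lt_top _ _⟩
  have hnsum : ∑ i, n i = ν := by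
    ext s hs
    rw [Measure.finsetSum_apply]
    simp only [hn]
    simp_rw [withDensity_apply _ hs]
    rw [← lintegral_finsetSum _ (fun i _ => by fun_prop)]
    have : ∀ y, ∑ i, ENNReal.ofReal (g i y) = 1 := fun y => by
      rw [← ENNReal.ofReal_sum_of_nonneg (fun i _ => hg0 i y), hg1 y, ENNReal.ofReal_one]
    simp [this]
  have hmu0 : ∀ i, m i Set.univ ≠ 0 := fun i => by simpa using hm0 i
  have hmut : ∀ i, m i Set.univ ≠ ⊤ := fun i => measure_ne_top _ _
  set π : Measure ((EE d) × (EE d)) := ∑ i, (m i Set.univ)⁻¹ • (m i).prod (n i) with hπ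
  have h1 : π.map Prod.fst = μ := by
    rw [hπ, Measure.map_finset_sum (by fun_prop)]
    rw [← hm]
    refine Finset.sum_congr rfl fun i _ => ?_
    rw [Measure.map_smul, Measure.map_fst_prod, hnu i, smul_smul,
      ENNReal.inv_mul_cancel (hmu0 i) (hmut i), one_smul]
  have h2 : π.map Prod.snd = ν := by
    rw [hπ, Measure.map_finset_sum (by fun_prop)]
    conv_rhs => rw [← hnsum]
    refine Finset.sum_congr rfl fun i _ => ?_
    rw [Measure.map_smul, Measure.map_snd_prod, smul_smul,
      ENNReal.inv_mul_cancel (hmu0 i) (hmut i), one_smul]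
  have hle : W2sq μ ν ≤ ∫ p, ‖p.1 - p.2‖ ^ 2 ∂π := by
    refine csInf_le ⟨0, ?_⟩ ⟨π, ⟨h1, h2⟩, rfl⟩
    rintro r ⟨ρ, -, rfl⟩
    exact integral_nonneg fun p => by positivity
  refine hle.trans (le_of_eq ?_)
  have hμi := integrable_id_of_sq μ hμ
  have hνi := integrable_id_of_sq ν hν
  have hmi : ∀ i, Integrable (fun x : EE d => x) (m i) := fun i => by
    rw [← hm] at hμi
    exact integrable_finsetSum_measure.1 hμi i (Finset.mem_univ i)
  have hni : ∀ i, Integrable (fun x : EE d => x) (n i) := fun i => by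
    rw [← hnsum] at hνi
    exact integrable_finsetSum_measure.1 hνi i (Finset.mem_univ i)
  have i1 : Integrable (fun p : (EE d) × (EE d) => ‖p.1‖ ^ 2) π := by
    have := hμ
    rw [← h1] at this
    exact this.comp_measurable measurable_fst
  have i2 : Integrable (fun p : (EE d) × (EE d) => ‖p.2‖ ^ 2) π := by
    have := hν
    rw [← h2] at this
    exact this.comp_measurable measurable_snd
  have e1 : ∫ p, ‖p.1‖ ^ 2 ∂π = ∫ x, ‖x‖ ^ 2 ∂μ := by
    rw [← h1, integral_map (by fun_prop) (by fun_prop)]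
  have e2 : ∫ p, ‖p.2‖ ^ 2 ∂π = ∫ x, ‖x‖ ^ 2 ∂ν := by
    rw [← h2, integral_map (by fun_prop) (by fun_prop)]
  have i3' : ∀ i, Integrable (fun p : (EE d) × (EE d) => inner ℝ p.1 p.2)
      ((m i Set.univ)⁻¹ • (m i).prod (n i)) := fun i => by
    refine Integrable.smul_measure ?_ (ENNReal.inv_ne_top.2 (hmu0 i))
    exact Integrable.op_fst_snd (op := fun x y : EE d => inner ℝ x y)
      (by simp only [Function.uncurry_def]; fun_prop)
      ⟨1, fun x y => by rw [one_mul]; exact norm_inner_le_norm x y⟩ (hmi i) (hni i)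
  have i3 : Integrable (fun p : (EE d) × (EE d) => inner ℝ p.1 p.2) π :=
    integrable_finsetSum_measure.2 fun i _ => i3' i
  have e3 : ∫ p, inner ℝ p.1 p.2 ∂π
      = ∑ i, ((m i).real Set.univ)⁻¹ * inner ℝ (∫ x, x ∂(m i)) (∫ y, g i y • y ∂ν) := by
    rw [hπ, integral_finsetSum_measure fun i _ => i3' i]
    refine Finset.sum_congr rfl fun i _ => ?_
    rw [integral_smul_measure, ENNReal.toReal_inv, smul_eq_mul]
    congr 1
    have := integral_prod_bilin (innerSL ℝ (E := EE d)) (hmi i) (hni i)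
    refine this.trans ?_
    rw [innerSL_apply_apply]
    congr 1
    simp only [hn]
    rw [integral_withDensity_eq_integral_toReal_smul (by fun_prop) (by simp)]
    simp_rw [ENNReal.toReal_ofReal (hg0 i _)]
  simp_rw [norm_sub_sq_real]
  have i4 : Integrable (fun p : (EE d) × (EE d) => ‖p.1‖ ^ 2 - 2 * inner ℝ p.1 p.2) π :=
    i1.sub (i3.const_mul 2)
  rw [integral_add i4 i2, integral_sub i1 (i3.const_mul 2),
    integral_const_mul, e1, e2, e3]
  ring

/-- Moments `(∫ g_i, ∫ g_i y)` of measurable partitions of unity. -/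
def momentSet {d : ℕ} (ν : Measure (EE d)) (ι : Type) [Fintype ι] : Set (ι → ℝ × (EE d)) :=
  {w | ∃ g : ι → (EE d) → ℝ, (∀ i, Measurable (g i)) ∧ (∀ i y, 0 ≤ g i y) ∧
    (∀ y, ∑ i, g i y = 1) ∧ ∀ i, w i = ∫ y, g i y • ((1 : ℝ), y) ∂ν}

theorem part_le_one {d : ℕ} {ι : Type} [Fintype ι] {g : ι → (EE d) → ℝ} (hg0 : ∀ i y, 0 ≤ g i y)
    (hg1 : ∀ y, ∑ i, g i y = 1) (i : ι) (y : EE d) : ‖g i y‖ ≤ 1 := by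
  rw [Real.norm_of_nonneg (hg0 i y), ← hg1 y]
  exact Finset.single_le_sum (f := fun i => g i y) (fun j _ => hg0 j y) (Finset.mem_univ i)

theorem part_integrable {d : ℕ} (ν : Measure (EE d)) [IsProbabilityMeasure ν]
    (hνi : Integrable (fun y : EE d => y) ν)
    {ι : Type} [Fintype ι] {g : ι → (EE d) → ℝ} (hg : ∀ i, Measurable (g i))
    (hg0 : ∀ i y, 0 ≤ g i y) (hg1 : ∀ y, ∑ i, g i y = 1) (i : ι) :
    Integrable (fun y => g i y • ((1 : ℝ), y)) ν :=
  ((integrable_const (1 : ℝ)).prodMk hνi).bdd_smul 1 (hg i).aestronglyMeasurable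
    (Filter.Eventually.of_forall fun y => part_le_one hg0 hg1 i y)

theorem momentSet_convex {d : ℕ} (ν : Measure (EE d)) [IsProbabilityMeasure ν]
    (hνi : Integrable (fun y : EE d => y) ν) (ι : Type) [Fintype ι] :
    Convex ℝ (momentSet ν ι) := by
  rintro w ⟨g, hg, hg0, hg1, hw⟩ w' ⟨g', hg', hg0', hg1', hw'⟩ a b ha hb hab
  refine ⟨fun i y => a * g i y + b * g' i y, fun i => ?_, fun i y => ?_, fun y => ?_, fun i => ?_⟩
  · have := hg i
    have := hg' i
    fun_prop
  · have := hg0 i y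
    have := hg0' i y
    positivity
  · rw [Finset.sum_add_distrib, ← Finset.mul_sum, ← Finset.mul_sum, hg1, hg1']
    simpa using hab
  · simp_rw [add_smul, mul_smul]
    have j1 : Integrable (fun y => a • g i y • ((1 : ℝ), y)) ν :=
      (part_integrable ν hνi hg hg0 hg1 i).smul a
    have j2 : Integrable (fun y => b • g' i y • ((1 : ℝ), y)) ν :=
      (part_integrable ν hνi hg' hg0' hg1' i).smul b
    rw [integral_add j1 j2, integral_smul, integral_smul,
      ← hw i, ← hw' i]
    rfl

theorem target_mem {d : ℕ} (μ ν : Measure (EE d))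
    [IsProbabilityMeasure μ] [IsProbabilityMeasure ν]
    (hμi : Integrable (fun y : EE d => y) μ) (hνi : Integrable (fun y : EE d => y) ν)
    (h : ConvexOrder μ ν)
    {ι : Type} [Fintype ι] [Nonempty ι] (m : ι → Measure (EE d)) [∀ i, IsFiniteMeasure (m i)]
    (hm : ∑ i, m i = μ) :
    (fun i => ∫ x, ((1 : ℝ), x) ∂(m i)) ∈ closure (momentSet ν ι) := by
  classical
  by_contra hcon
  obtain ⟨F, u, hF, hu⟩ := geometric_hahn_banach_closed_point
    (momentSet_convex ν hνi ι).closure isClosed_closure hcon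
  have hmi : ∀ i, Integrable (fun x : EE d => x) (m i) := fun i => by
    rw [← hm] at hμi
    exact integrable_finsetSum_measure.1 hμi i (Finset.mem_univ i)
  set L : ι → (ℝ × (EE d)) →L[ℝ] ℝ :=
    fun i => F.comp (ContinuousLinearMap.single ℝ (fun _ : ι => ℝ × (EE d)) i) with hL
  have hFL : ∀ w, F w = ∑ i, L i (w i) := fun w => by
    simp only [hL, ContinuousLinearMap.comp_apply, ContinuousLinearMap.single_apply]
    rw [← map_sum, LinearMap.sum_single_apply]
  have hLm : ∀ i, Measurable fun y : EE d => L i (1, y) := fun i => by fun_prop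
  set f : (EE d) → ℝ := fun y => Finset.univ.sup' Finset.univ_nonempty (fun i => L i (1, y)) with hf
  have hLf : ∀ i y, L i (1, y) ≤ f y := fun i y =>
    Finset.le_sup' (fun i => L i (1, y)) (Finset.mem_univ i)
  have hfex : ∀ y, ∃ i, L i (1, y) = f y := fun y => by
    obtain ⟨i, -, hi⟩ := Finset.exists_mem_eq_sup' Finset.univ_nonempty (fun i => L i (1, y))
    exact ⟨i, hi.symm⟩
  have hfm : Measurable f := by
    have : f = Finset.univ.sup' Finset.univ_nonempty (fun i => fun y : EE d => L i (1, y)) := by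
      ext y; simp [hf, Finset.sup'_apply]
    rw [this]
    exact Finset.measurable_sup' _ (fun i _ => hLm i)
  have hLi : ∀ (ρ : Measure (EE d)) [IsFiniteMeasure ρ], Integrable (fun y : EE d => y) ρ →
      ∀ i, Integrable (fun y : EE d => L i (1, y)) ρ := fun ρ _ hρ i =>
    (L i).integrable_comp ((integrable_const (1 : ℝ)).prodMk hρ)
  have hfi : ∀ (ρ : Measure (EE d)) [IsFiniteMeasure ρ], Integrable (fun y : EE d => y) ρ →
      Integrable f ρ := fun ρ _ hρ => by
    refine Integrable.mono' (g := fun y => ∑ i, ‖L i (1, y)‖)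
      (integrable_finsetSum _ fun i _ => (hLi ρ hρ i).norm) hfm.aestronglyMeasurable
      (Filter.Eventually.of_forall fun y => ?_)
    obtain ⟨i, hi⟩ := hfex y
    rw [← hi]
    exact Finset.single_le_sum (f := fun i => ‖L i (1, y)‖) (fun j _ => norm_nonneg _)
      (Finset.mem_univ i)
  have hfc : ConvexOn ℝ Set.univ f := by
    refine ⟨convex_univ, fun x _ y _ a b ha hb hab => ?_⟩
    refine Finset.sup'_le _ _ fun i _ => ?_
    have : ((1 : ℝ), a • x + b • y) = a • ((1 : ℝ), x) + b • ((1 : ℝ), y) := by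
      ext <;> simp [hab]
    rw [this, map_add, map_smul, map_smul]
    simp only [smul_eq_mul]
    have := mul_le_mul_of_nonneg_left (hLf i x) ha
    have := mul_le_mul_of_nonneg_left (hLf i y) hb
    linarith
  -- selection
  set e : ι → (EE d) → ℝ := fun i => Set.indicator {y | L i (1, y) = f y} (fun _ => 1) with he
  have hem : ∀ i, Measurable (e i) := fun i =>
    measurable_const.indicator (measurableSet_eq_fun (hLm i) hfm)
  have he0 : ∀ i y, 0 ≤ e i y := fun i y => Set.indicator_nonneg (fun _ _ => zero_le_one) _
  have heL : ∀ i y, e i y * L i (1, y) = e i y * f y := fun i y => by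
    by_cases hy : L i (1, y) = f y
    · rw [hy]
    · simp [he, hy]
  have hN : ∀ y, 0 < ∑ i, e i y := fun y => by
    obtain ⟨i, hi⟩ := hfex y
    refine Finset.sum_pos' (fun j _ => he0 j y) ⟨i, Finset.mem_univ i, ?_⟩
    simp [he, hi]
  set g : ι → (EE d) → ℝ := fun i y => e i y / ∑ j, e j y with hgdef
  have hg : ∀ i, Measurable (g i) := fun i =>
    (hem i).div (Finset.measurable_sum _ fun j _ => hem j)
  have hg0 : ∀ i y, 0 ≤ g i y := fun i y => div_nonneg (he0 i y) (hN y).le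
  have hg1 : ∀ y, ∑ i, g i y = 1 := fun y => by
    simp only [hgdef]
    rw [← Finset.sum_div, div_self (hN y).ne']
  have hgf : ∀ y, ∑ i, g i y * L i (1, y) = f y := fun y => by
    have : ∀ i, g i y * L i (1, y) = g i y * f y := fun i => by
      simp only [hgdef]
      rw [div_mul_eq_mul_div, heL, div_mul_eq_mul_div]
    simp_rw [this]
    rw [← Finset.sum_mul, hg1, one_mul]
  have key := hF _ (subset_closure ⟨g, hg, hg0, hg1, fun i => rfl⟩)
  have hle : F (fun i => ∫ x, ((1 : ℝ), x) ∂(m i)) ≤ ∫ x, f x ∂μ := by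
    rw [hFL, ← hm, integral_finsetSum_measure fun i _ => hfi _ (hmi i)]
    refine Finset.sum_le_sum fun i _ => ?_
    rw [← (L i).integral_comp_comm ((integrable_const (1 : ℝ)).prodMk (hmi i))]
    exact integral_mono (hLi _ (hmi i) i) (hfi _ (hmi i)) (hLf i)
  have heq : F (fun i => ∫ y, g i y • ((1 : ℝ), y) ∂ν) = ∫ y, f y ∂ν := by
    rw [hFL]
    have hi := fun i => part_integrable ν hνi hg hg0 hg1 i
    simp_rw [← fun i => (L i).integral_comp_comm (hi i)]
    rw [← integral_finsetSum _ fun i _ => (L i).integrable_comp (hi i)]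
    simp_rw [map_smul, smul_eq_mul, hgf]
  have hco := h f hfc (hfi μ hμi) (hfi ν hνi)
  linarith

theorem partition_bound {d : ℕ} (μ ν : Measure (EE d))
    [IsProbabilityMeasure μ] [IsProbabilityMeasure ν]
    (hμ : Integrable (fun x => ‖x‖ ^ 2) μ) (hν : Integrable (fun y => ‖y‖ ^ 2) ν)
    (h : ConvexOrder μ ν)
    {ι : Type} [Fintype ι] [Nonempty ι] (m : ι → Measure (EE d)) [∀ i, IsFiniteMeasure (m i)]
    (hm0 : ∀ i, m i ≠ 0) (hm : ∑ i, m i = μ) :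
    W2sq μ ν ≤ ∫ x, ‖x‖ ^ 2 ∂μ + ∫ y, ‖y‖ ^ 2 ∂ν
      - 2 * ∑ i, ((m i).real Set.univ)⁻¹ * ‖∫ x, x ∂(m i)‖ ^ 2 := by
  have hμi := integrable_id_of_sq μ hμ
  have hνi := integrable_id_of_sq ν hν
  have hmi : ∀ i, Integrable (fun x : EE d => x) (m i) := fun i => by
    rw [← hm] at hμi
    exact integrable_finsetSum_measure.1 hμi i (Finset.mem_univ i)
  obtain ⟨w, hw, hlim⟩ := mem_closure_iff_seq_limit.1 (target_mem μ ν hμi hνi h m hm)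
  choose g hg hg0 hg1 hwg using hw
  set p : ι → ℝ := fun i => (m i).real Set.univ with hp
  have hppos : ∀ i, 0 < p i := fun i => by
    have : m i Set.univ ≠ 0 := by simpa using hm0 i
    exact ENNReal.toReal_pos this (measure_ne_top _ _)
  have hpsum : ∑ i, p i = 1 := by
    have h1 : (1 : ℝ) = ∫ x, (1 : ℝ) ∂μ := by simp
    rw [h1, ← hm, integral_finsetSum_measure fun i _ => integrable_const _]
    simp [hp]
  have hlim' := tendsto_pi_nhds.1 hlim
  have hq : ∀ i, Filter.Tendsto (fun n => (w n i).1) Filter.atTop (nhds (p i)) := fun i => by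
    have := (continuous_fst.tendsto _).comp (hlim' i)
    rw [fst_integral ((integrable_const (1 : ℝ)).prodMk (hmi i))] at this
    simpa [hp, Function.comp_def] using this
  have hv : ∀ i, Filter.Tendsto (fun n => (w n i).2) Filter.atTop (nhds (∫ x, x ∂(m i))) :=
    fun i => by
    have := (continuous_snd.tendsto _).comp (hlim' i)
    rw [snd_integral ((integrable_const (1 : ℝ)).prodMk (hmi i))] at this
    exact this
  have hw1 : ∀ n i, (w n i).1 = ∫ y, g n i y ∂ν := fun n i => by
    rw [hwg, fst_integral (part_integrable ν hνi (hg n) (hg0 n) (hg1 n) i)]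
    simp
  have hw2 : ∀ n i, (w n i).2 = ∫ y, g n i y • y ∂ν := fun n i => by
    rw [hwg, snd_integral (part_integrable ν hνi (hg n) (hg0 n) (hg1 n) i)]
    simp
  have hgi : ∀ n i, Integrable (g n i) ν := fun n i =>
    Integrable.of_bound (hg n i).aestronglyMeasurable 1
      (Filter.Eventually.of_forall fun y => part_le_one (hg0 n) (hg1 n) i y)
  have hgyi : ∀ n i, Integrable (fun y => g n i y • y) ν := fun n i =>
    hνi.bdd_smul 1 (hg n i).aestronglyMeasurable
      (Filter.Eventually.of_forall fun y => part_le_one (hg0 n) (hg1 n) i y)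
  have hqsum : ∀ n, ∑ i, (w n i).1 = 1 := fun n => by
    simp_rw [hw1]
    rw [← integral_finsetSum _ fun i _ => hgi n i]
    simp [hg1]
  set δ : ℕ → ℝ := fun n => ∑ i, |(w n i).1 - p i| / p i with hδ
  have hδ0 : ∀ n, 0 ≤ δ n := fun n =>
    Finset.sum_nonneg fun i _ => div_nonneg (abs_nonneg _) (hppos i).le
  have hδlim : Filter.Tendsto δ Filter.atTop (nhds 0) := by
    have : Filter.Tendsto δ Filter.atTop (nhds (∑ i, |p i - p i| / p i)) :=
      tendsto_finsetSum _ fun i _ => (((hq i).sub_const (p i)).abs).div_const (p i)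
    simpa using this
  have hqle : ∀ n i, (1 + δ n)⁻¹ * (w n i).1 ≤ p i := fun n i => by
    have h1 : |(w n i).1 - p i| / p i ≤ δ n :=
      Finset.single_le_sum (f := fun i => |(w n i).1 - p i| / p i)
        (fun j _ => div_nonneg (abs_nonneg _) (hppos j).le) (Finset.mem_univ i)
    rw [div_le_iff₀ (hppos i)] at h1
    have h2 := le_abs_self ((w n i).1 - p i)
    have h3 : 0 < 1 + δ n := by linarith [hδ0 n]
    rw [inv_mul_le_iff₀ h3]
    linarith
  set a : ℕ → ℝ := fun n => (1 + δ n)⁻¹ with ha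
  have ha0 : ∀ n, 0 ≤ a n := fun n => inv_nonneg.2 (by linarith [hδ0 n])
  have halim : Filter.Tendsto a Filter.atTop (nhds 1) := by
    have := (hδlim.const_add 1).inv₀ (by norm_num)
    simpa using this
  have key : ∀ n, W2sq μ ν ≤ ∫ x, ‖x‖ ^ 2 ∂μ + ∫ y, ‖y‖ ^ 2 ∂ν
      - 2 * ∑ i, (p i)⁻¹ * inner ℝ (∫ x, x ∂(m i))
        (a n • (w n i).2 + (p i - a n * (w n i).1) • ∫ y, y ∂ν) := fun n => by
    have := coupling_bound μ ν hμ hν m hm0 hm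
      (fun i y => a n * g n i y + (p i - a n * (w n i).1))
      (fun i => by have := hg n i; fun_prop)
      (fun i y => add_nonneg (mul_nonneg (ha0 n) (hg0 n i y)) (sub_nonneg.2 (hqle n i)))
      (fun y => by
        rw [Finset.sum_add_distrib, Finset.sum_sub_distrib, ← Finset.mul_sum, ← Finset.mul_sum,
          hg1, hqsum, hpsum]
        ring)
      (fun i => by
        rw [integral_add ((hgi n i).const_mul _) (integrable_const _), integral_const_mul, ← hw1]
        simp [hp])
    refine this.trans (le_of_eq ?_)
    congr 2
    refine Finset.sum_congr rfl fun i _ => ?_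
    congr 2
    simp_rw [add_smul, mul_smul]
    have j1 : Integrable (fun y => a n • g n i y • y) ν := (hgyi n i).smul (a n)
    have j2 : Integrable (fun y : EE d => (p i - a n * (w n i).1) • y) ν :=
      hνi.smul (p i - a n * (w n i).1)
    rw [integral_add j1 j2, integral_smul, integral_smul, ← hw2]
  have hfin : Filter.Tendsto (fun n => ∫ x, ‖x‖ ^ 2 ∂μ + ∫ y, ‖y‖ ^ 2 ∂ν
      - 2 * ∑ i, (p i)⁻¹ * inner ℝ (∫ x, x ∂(m i))
        (a n • (w n i).2 + (p i - a n * (w n i).1) • ∫ y, y ∂ν)) Filter.atTop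
      (nhds (∫ x, ‖x‖ ^ 2 ∂μ + ∫ y, ‖y‖ ^ 2 ∂ν
      - 2 * ∑ i, (p i)⁻¹ * inner ℝ (∫ x, x ∂(m i))
        ((1 : ℝ) • (∫ x, x ∂(m i)) + (p i - 1 * p i) • ∫ y, y ∂ν))) := by
    refine Filter.Tendsto.const_sub _ (Filter.Tendsto.const_mul _
      (tendsto_finsetSum _ fun i _ => Filter.Tendsto.const_mul _ ?_))
    refine Filter.Tendsto.inner tendsto_const_nhds ?_
    exact (halim.smul (hv i)).add (((halim.mul (hq i)).const_sub (p i)).smul_const _)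
  have := ge_of_tendsto' hfin key
  simpa using this

theorem stmt6 (d : ℕ) (hd : 1 ≤ d)
    (μ ν : Measure (EuclideanSpace ℝ (Fin d)))
    [IsProbabilityMeasure μ] [IsProbabilityMeasure ν]
    (hμ : Integrable (fun x => ‖x‖ ^ 2) μ) (hν : Integrable (fun y => ‖y‖ ^ 2) ν)
    (h : ConvexOrder μ ν) :
    W2sq μ ν ≤ ∫ y, ‖y‖ ^ 2 ∂ν - ∫ x, ‖x‖ ^ 2 ∂μ := by
  classical
  have hμi := integrable_id_of_sq μ hμ
  have h2 : MemLp (fun x : EE d => x) 2 μ :=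
    (memLp_two_iff_integrable_sq_norm (by fun_prop)).2 hμ
  refine le_of_forall_pos_le_add fun ε hε => ?_
  obtain ⟨S, hS, hSm⟩ := h2.exists_simpleFunc_eLpNorm_sub_lt (by norm_num)
    (ε := ENNReal.ofReal (Real.sqrt (ε / 2)))
    (by simpa using hε)
  have hsub : MemLp (fun x => x - S x) 2 μ := h2.sub hSm
  have hsubi : Integrable (fun x => ‖x - S x‖ ^ 2) μ := hsub.integrable_norm_pow (by norm_num)
  have hSε : ∫ x, ‖x - S x‖ ^ 2 ∂μ ≤ ε / 2 := by
    have e := hsub.eLpNorm_eq_integral_rpow_norm (by norm_num) (by norm_num)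
    have hS' : eLpNorm (fun x => x - S x) 2 μ < ENNReal.ofReal (Real.sqrt (ε / 2)) := hS
    rw [e, ENNReal.ofReal_lt_ofReal_iff (by positivity)] at hS'
    simp only [ENNReal.toReal_ofNat, Real.rpow_ofNat] at hS'
    rw [← one_div, ← Real.sqrt_eq_rpow] at hS'
    exact (Real.sqrt_lt_sqrt_iff (integral_nonneg fun x => by positivity)).1 hS' |>.le
  set R : (EE d) → Measure (EE d) := fun s => μ.restrict (S ⁻¹' {s}) with hR
  have hRsum : ∑ s ∈ S.range, R s = μ := by
    have h1 := Measure.restrict_biUnion_finset (μ := μ) (T := S.range)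
      (s := fun s => S ⁻¹' {s})
      (fun a _ b _ hab => Disjoint.preimage _ (by simpa using hab))
      (fun s => S.measurableSet_fiber s)
    have h2 : (⋃ s ∈ S.range, S ⁻¹' {s}) = Set.univ := by
      ext x; simp
    rw [h2, Measure.restrict_univ, Measure.sum_fintype] at h1
    rw [← Finset.sum_coe_sort]
    exact h1.symm
  set T := S.range.filter (fun s => R s ≠ 0) with hT
  have hTsum : ∑ s ∈ T, R s = μ := by
    rw [hT, Finset.sum_filter_ne_zero, hRsum]
  set m : T → Measure (EE d) := fun s => R s with hmdef
  have hm : ∑ s, m s = μ := (Finset.sum_coe_sort T R).trans hTsum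
  have hm0 : ∀ s, m s ≠ 0 := fun s => (Finset.mem_filter.1 s.2).2
  have hfinm : ∀ s, IsFiniteMeasure (m s) := fun s => by
    simp only [hmdef, hR]; infer_instance
  have hne : Nonempty T := by
    by_contra hc
    rw [not_nonempty_iff] at hc
    rw [Finset.univ_eq_empty, Finset.sum_empty] at hm
    exact IsProbabilityMeasure.ne_zero μ hm.symm
  have hmain := partition_bound μ ν hμ hν h m hm0 hm
  have hfib : ∀ s : T, ∀ᵐ x ∂(m s), S x = s := fun s => by
    simp only [hmdef, hR]
    exact ae_restrict_mem (S.measurableSet_fiber s)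
  have hsm : ∀ {f : (EE d) → ℝ}, Integrable f μ → ∀ s, Integrable f (m s) := fun {f} hf s => by
    rw [← hm] at hf
    exact integrable_finsetSum_measure.1 hf s (Finset.mem_univ s)
  have hmi : ∀ s, Integrable (fun x : EE d => x) (m s) := fun s => by
    rw [← hm] at hμi
    exact integrable_finsetSum_measure.1 hμi s (Finset.mem_univ s)
  have hstep : ∀ s, ∫ x, ‖x‖ ^ 2 ∂(m s) - ∫ x, ‖x - S x‖ ^ 2 ∂(m s)
      ≤ ((m s).real Set.univ)⁻¹ * ‖∫ x, x ∂(m s)‖ ^ 2 := fun s => by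
    have hppos : 0 < (m s).real Set.univ := by
      have : m s Set.univ ≠ 0 := by simpa using hm0 s
      exact ENNReal.toReal_pos this (measure_ne_top _ _)
    set P := (m s).real Set.univ with hP
    set v := ∫ x, x ∂(m s) with hv
    have e1 : ∫ x, ‖x - S x‖ ^ 2 ∂(m s)
        = ∫ x, (‖x‖ ^ 2 - 2 * inner ℝ (s : EE d) x + ‖(s : EE d)‖ ^ 2) ∂(m s) := by
      refine integral_congr_ae ?_
      filter_upwards [hfib s] with x hx
      rw [hx, norm_sub_sq_real, real_inner_comm]
    have j1 := hsm hμ s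
    have j2 : Integrable (fun x => 2 * inner ℝ (s : EE d) x) (m s) :=
      ((hmi s).const_inner (s : EE d)).const_mul 2
    have j3 : Integrable (fun x => ‖x‖ ^ 2 - 2 * inner ℝ (s : EE d) x) (m s) := j1.sub j2
    rw [e1, integral_add j3 (integrable_const _), integral_sub j1 j2, integral_const_mul,
      integral_inner (hmi s), integral_const, smul_eq_mul, ← hv, ← hP]
    have hsq : 0 ≤ ‖v - P • (s : EE d)‖ ^ 2 := by positivity
    rw [norm_sub_sq_real, inner_smul_right, norm_smul, Real.norm_of_nonneg hppos.le,
      real_inner_comm] at hsq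
    rw [inv_mul_eq_div, le_div_iff₀ hppos]
    nlinarith
  have hsum := Finset.sum_le_sum fun s (_ : s ∈ Finset.univ) => hstep s
  rw [Finset.sum_sub_distrib, ← integral_finsetSum_measure fun s _ => hsm hμ s,
    ← integral_finsetSum_measure fun s _ => hsm hsubi s, hm] at hsum
  linarith
end
end

section
/- Let d ≥ 1 and let μ, ν be Borel probability measures on ℝ^d with finite second moments. If μ and ν are in convex order (μ ≼_c ν), then sup over π ∈ Π(μ,ν) of ∫ ⟨x,y⟩ dπ(x,y) ≥ ∫ |x|² dμ(x). -/
open MeasureTheory Metric RealInnerProductSpace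

noncomputable section

/-- `C(α,β) = sup_{π ∈ Π(α,β)} ∫ ⟨x,y⟩ dπ`. -/
def OTcost {d : ℕ} (α β : Measure (EuclideanSpace ℝ (Fin d))) : ℝ :=
  sSup {r : ℝ | ∃ π ∈ Couplings α β, r = ∫ p, ⟪p.1, p.2⟫ ∂π}

lemma semi {Ω ι : Type*} [MeasurableSpace Ω] [Fintype ι] [Nonempty ι] (ν : Measure Ω)
    [IsProbabilityMeasure ν] (A : ι → Ω → ℝ) (hAm : ∀ i, Measurable (A i))
    (hA : ∀ i, Integrable (A i) ν) (w : ι → ℝ) (hw : ∀ i, 0 < w i) (hw1 : ∑ i, w i = 1) (c : ℝ)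
    (hc : ∀ g : ι → ℝ, c ≤ ∑ i, w i * g i +
      ∫ y, Finset.univ.sup' Finset.univ_nonempty (fun i => A i y - g i) ∂ν)
    (ε : ℝ) (hε : 0 < ε) :
    ∃ h : ι → Ω → ℝ, (∀ i, Measurable (h i)) ∧ (∀ i y, 0 ≤ h i y) ∧ (∀ y, ∑ i, h i y = 1) ∧
      (∀ i, ∫ y, h i y ∂ν = w i) ∧ c - ε ≤ ∑ i, ∫ y, h i y * A i y ∂ν := by
  classical
  set H : Set (ι → Ω → ℝ) := {h | (∀ i, Measurable (h i)) ∧ (∀ i y, 0 ≤ h i y) ∧ (∀ y, ∑ i, h i y = 1)} with hH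
  have hle1 : ∀ h ∈ H, ∀ i y, h i y ≤ 1 := by
    rintro h ⟨-, h0, h1⟩ i y
    rw [← h1 y]
    exact Finset.single_le_sum (f := fun i => h i y) (fun j _ => h0 j y) (Finset.mem_univ i)
  have hint : ∀ h ∈ H, ∀ i, Integrable (h i) ν := by
    intro h hh i
    refine Integrable.of_bound (hh.1 i).aestronglyMeasurable 1 (ae_of_all _ fun y => ?_)
    rw [Real.norm_eq_abs, abs_of_nonneg (hh.2.1 i y)]
    exact hle1 h hh i y
  have hintA : ∀ h ∈ H, ∀ i, Integrable (fun y => h i y * A i y) ν := by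
    intro h hh i
    refine (hA i).bdd_mul (hh.1 i).aestronglyMeasurable (c := 1) (ae_of_all _ fun y => ?_)
    rw [Real.norm_eq_abs, abs_of_nonneg (hh.2.1 i y)]
    exact hle1 h hh i y
  set M : ℝ := ∑ i, ∫ y, |A i y| ∂ν with hM
  have hM0 : 0 ≤ M := Finset.sum_nonneg fun i _ => integral_nonneg fun y => abs_nonneg _
  have hcost : ∀ h ∈ H, |∑ i, ∫ y, h i y * A i y ∂ν| ≤ M := by
    intro h hh
    refine (Finset.abs_sum_le_sum_abs _ _).trans (Finset.sum_le_sum fun i _ => ?_)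
    refine (abs_integral_le_integral_abs).trans (integral_mono (hintA h hh i).abs (hA i).abs ?_)
    intro y
    simp only [abs_mul, abs_of_nonneg (hh.2.1 i y)]
    exact mul_le_of_le_one_left (abs_nonneg _) (hle1 h hh i y)
  have hconst : ∀ v : ι → ℝ, (∀ i, 0 ≤ v i) → ∑ i, v i = 1 → (fun i (_ : Ω) => v i) ∈ H :=
    fun v h0 h1 => ⟨fun i => measurable_const, fun i _ => h0 i, fun _ => h1⟩
  have hconv : ∀ h ∈ H, ∀ k ∈ H, ∀ a b : ℝ, 0 ≤ a → 0 ≤ b → a + b = 1 →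
      (fun i y => a * h i y + b * k i y) ∈ H := by
    rintro h ⟨h1, h2, h3⟩ k ⟨k1, k2, k3⟩ a b ha hb hab
    refine ⟨fun i => ((h1 i).const_mul a).add ((k1 i).const_mul b), fun i y => ?_, fun y => ?_⟩
    · have := h2 i y
      have := k2 i y
      positivity
    · rw [Finset.sum_add_distrib, ← Finset.mul_sum, ← Finset.mul_sum, h3, k3]; simpa
  have hmass : ∀ h ∈ H, ∀ k ∈ H, ∀ a b : ℝ, ∀ i,
      ∫ y, (a * h i y + b * k i y) ∂ν = a * ∫ y, h i y ∂ν + b * ∫ y, k i y ∂ν := by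
    intro h hh k hk a b i
    rw [integral_add ((hint h hh i).const_mul a) ((hint k hk i).const_mul b),
      integral_const_mul, integral_const_mul]
  have hcostadd : ∀ h ∈ H, ∀ k ∈ H, ∀ a b : ℝ, 
      ∑ i, ∫ y, (a * h i y + b * k i y) * A i y ∂ν =
        a * ∑ i, ∫ y, h i y * A i y ∂ν + b * ∑ i, ∫ y, k i y * A i y ∂ν := by
    intro h hh k hk a b
    rw [Finset.mul_sum, Finset.mul_sum, ← Finset.sum_add_distrib]
    refine Finset.sum_congr rfl fun i _ => ?_
    rw [← integral_const_mul, ← integral_const_mul,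
      ← integral_add ((hintA h hh i).const_mul a) ((hintA k hk i).const_mul b)]
    congr 1; ext y; ring
  set K : Set ((ι → ℝ) × ℝ) := {p | ∃ h ∈ H, (∀ i, ∫ y, h i y ∂ν = p.1 i) ∧
    p.2 ≤ ∑ i, ∫ y, h i y * A i y ∂ν} with hK
  have hKc : Convex ℝ K := by
    rintro p ⟨h, hh, hm, hr⟩ q ⟨k, hk, km, kr⟩ a b ha hb hab
    refine ⟨_, hconv h hh k hk a b ha hb hab, fun i => ?_, ?_⟩
    · rw [hmass h hh k hk, hm, km]; simp
    · rw [hcostadd h hh k hk]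
      simp only [Prod.snd_add, Prod.smul_snd, smul_eq_mul]
      gcongr
  have hwH := hconst w (fun i => (hw i).le) hw1
  have hmem : (w, c) ∈ closure K := by
    by_contra hcon
    obtain ⟨f, u, hfu, huf⟩ := geometric_hahn_banach_closed_point hKc.closure isClosed_closure hcon
    have hfK : ∀ p ∈ K, f p < f (w, c) := fun p hp => (hfu p (subset_closure hp)).trans huf
    set κ : ℝ := f (0, 1) with hκ
    set l : ι → ℝ := fun i => f (Pi.single i 1, 0) with hl
    have hf : ∀ m r, f (m, r) = ∑ i, m i * l i + r * κ := by
      intro m r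
      have : (m, r) = ∑ i, m i • ((Pi.single i 1 : ι → ℝ), (0:ℝ)) + r • ((0 : ι → ℝ), (1:ℝ)) := by
        ext i
        · simp [Prod.fst_sum, Finset.sum_apply, Pi.single_apply]
        · simp [Prod.snd_sum]
      rw [this, map_add, map_sum, map_smul]
      simp only [map_smul, smul_eq_mul, hl, hκ]
    have hκpos : 0 < κ := by
      set r0 := ∑ i, ∫ y, w i * A i y ∂ν with hr0
      have h1 : (w, r0) ∈ K := ⟨_, hwH, fun i => by simp, le_rfl⟩
      have h2 := hfK _ h1
      rw [hf, hf] at h2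
      have h3 : r0 < c := by
        by_contra! h3
        exact hcon (subset_closure ⟨_, hwH, fun i => by simp, h3⟩)
      by_contra! h4
      nlinarith
    set g : ι → ℝ := fun i => - l i / κ with hg
    set F : Ω → ℝ := fun y => Finset.univ.sup' Finset.univ_nonempty (fun i => A i y - g i) with hF
    have hFm : Measurable F := by
      have := Finset.measurable_sup' (s := (Finset.univ : Finset ι)) Finset.univ_nonempty
        (f := fun i y => A i y - g i) (fun i _ => (hAm i).sub_const _)
      convert this using 1
      ext y; simp [hF, Finset.sup'_apply]
    set ind : ι → Ω → ℝ := fun i y => if A i y - g i = F y then 1 else 0 with hind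
    have hindm : ∀ i, Measurable (ind i) := fun i =>
      Measurable.ite (measurableSet_eq_fun ((hAm i).sub_const _) hFm) measurable_const measurable_const
    have hind0 : ∀ i y, 0 ≤ ind i y := fun i y => by simp only [hind]; split_ifs <;> norm_num
    have hsum : ∀ y, 0 < ∑ i, ind i y := by
      intro y
      obtain ⟨i, -, hi⟩ := Finset.exists_mem_eq_sup' (Finset.univ_nonempty (α := ι)) (fun i => A i y - g i)
      refine Finset.sum_pos' (fun i _ => hind0 i y) ⟨i, Finset.mem_univ i, ?_⟩
      simp only [hind]
      rw [if_pos hi.symm]; norm_num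
    set h : ι → Ω → ℝ := fun i y => ind i y / ∑ j, ind j y with hh
    have hhH : h ∈ H := by
      refine ⟨fun i => (hindm i).div (Finset.measurable_sum _ fun j _ => hindm j),
        fun i y => div_nonneg (hind0 i y) (hsum y).le, fun y => ?_⟩
      simp only [hh]
      rw [← Finset.sum_div, div_self (hsum y).ne']
    have hhF : ∀ y, F y = ∑ i, (h i y * A i y - h i y * g i) := by
      intro y
      have : ∀ i, h i y * A i y - h i y * g i = h i y * F y := by
        intro i
        simp only [hh, hind]
        split_ifs with h5
        · rw [← h5]; ring
        · simp
      simp_rw [this]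
      rw [← Finset.sum_mul, hhH.2.2, one_mul]
    have h1 := hfK (fun i => ∫ y, h i y ∂ν, ∑ i, ∫ y, h i y * A i y ∂ν) ⟨h, hhH, fun i => rfl, le_rfl⟩
    have h2 := hc g
    have h3 : ∫ y, F y ∂ν = ∑ i, ∫ y, h i y * A i y ∂ν - ∑ i, (∫ y, h i y ∂ν) * g i := by
      simp_rw [hhF]
      have h5 : ∀ i ∈ Finset.univ, Integrable (fun y => h i y * A i y - h i y * g i) ν :=
        fun i _ => (hintA h hhH i).sub ((hint h hhH i).mul_const _)
      rw [integral_finsetSum _ h5, ← Finset.sum_sub_distrib]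
      refine Finset.sum_congr rfl fun i _ => ?_
      rw [integral_sub (hintA h hhH i) ((hint h hhH i).mul_const _), integral_mul_const]
    rw [hf, hf] at h1
    have h4 : ∀ m : ι → ℝ, ∑ i, m i * l i = - κ * ∑ i, m i * g i := by
      intro m
      rw [Finset.mul_sum]
      refine Finset.sum_congr rfl fun i _ => ?_
      simp only [hg]; field_simp
    rw [h4, h4] at h1
    change c ≤ _ + ∫ y, F y ∂ν at h2
    rw [h3] at h2
    nlinarith
  obtain ⟨i0, hi0⟩ := Finite.exists_min w
  set δ : ℝ := ε / (4 * (M + 1) + ε) with hδ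
  have hδ0 : 0 < δ := by positivity
  have hδ1 : δ < 1 := by rw [hδ, div_lt_one (by positivity)]; linarith
  have hδM : 2 * δ * M ≤ ε / 2 := by
    have : δ * (4 * (M + 1) + ε) = ε := by rw [hδ]; field_simp
    nlinarith
  obtain ⟨⟨m, r⟩, ⟨h, hh, hm, hr⟩, hd⟩ := Metric.mem_closure_iff.1 hmem (min (ε / 2) (δ * w i0))
    (lt_min (by positivity) (mul_pos hδ0 (hw i0)))
  rw [Prod.dist_eq, max_lt_iff] at hd
  obtain ⟨hd1, hd2⟩ := hd
  simp only at hm hr hd1 hd2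
  rw [Real.dist_eq] at hd2
  have hd2' := (abs_lt.1 (hd2.trans_le (min_le_left _ _)))
  have hd1' : ∀ i, |w i - m i| < δ * w i := fun i => by
    have := dist_le_pi_dist w m i
    rw [Real.dist_eq] at this
    refine (this.trans_lt (hd1.trans_le (min_le_right _ _))).trans_le ?_
    exact mul_le_mul_of_nonneg_left (hi0 i) hδ0.le
  set v : ι → ℝ := fun i => (w i - (1 - δ) * m i) / δ with hv
  have hv0 : ∀ i, 0 ≤ v i := by
    intro i
    have h1 := abs_lt.1 (hd1' i)
    have : 0 ≤ m i := by rw [← hm i]; exact integral_nonneg (hh.2.1 i)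
    apply div_nonneg _ hδ0.le
    nlinarith
  have hm1 : ∑ i, m i = 1 := by
    simp_rw [← hm]
    rw [← integral_finsetSum _ fun i _ => hint h hh i]
    simp [hh.2.2]
  have hv1 : ∑ i, v i = 1 := by
    simp only [hv]
    rw [← Finset.sum_div, Finset.sum_sub_distrib, ← Finset.mul_sum, hw1, hm1]
    field_simp; ring
  have hvH := hconst v hv0 hv1
  have hres := hconv h hh _ hvH (1 - δ) δ (by linarith) hδ0.le (by ring)
  refine ⟨_, hres.1, hres.2.1, hres.2.2, fun i => ?_, ?_⟩
  · rw [hmass h hh _ hvH, hm]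
    simp [hv]; field_simp; ring
  · rw [hcostadd h hh _ hvH]
    have h1 := abs_le.1 (hcost h hh)
    have h2 := abs_le.1 (hcost _ hvH)
    nlinarith
lemma exists_partition {E : Type*} [NormedAddCommGroup E] [InnerProductSpace ℝ E]
    [MeasurableSpace E] [BorelSpace E] [SecondCountableTopology E] (μ : Measure E)
    [IsProbabilityMeasure μ] (hμ : MemLp (fun x : E => x) 2 μ) (ε : ℝ) (hε : 0 < ε) :
    ∃ (ι : Type) (_ : Fintype ι) (B : ι → Set E) (s : ι → E), (∀ i, MeasurableSet (B i)) ∧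
      Pairwise (Function.onFun Disjoint B) ∧ (∀ i, 0 < μ.real (B i)) ∧ (∀ᵐ x ∂μ, x ∈ ⋃ i, B i) ∧
      ∑ i, ∫ x in B i, ‖x - s i‖ ^ 2 ∂μ ≤ ε := by
  classical
  obtain ⟨S, hS, hS2⟩ := hμ.exists_simpleFunc_eLpNorm_sub_lt (by simp) (ε := ENNReal.ofReal (√ε))
    (by simp [hε])
  have hm := hμ.sub hS2
  rw [hm.eLpNorm_eq_integral_rpow_norm (by simp) (by simp)] at hS
  have h1 : ∫ x, ‖x - S x‖ ^ 2 ∂μ < ε := by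
    rw [ENNReal.ofReal_lt_ofReal_iff (by positivity)] at hS
    simp only [Pi.sub_apply, ENNReal.toReal_ofNat, Real.rpow_ofNat] at hS
    rw [show ((2:ℝ)⁻¹) = 1 / 2 by norm_num, ← Real.sqrt_eq_rpow] at hS
    exact (Real.sqrt_lt_sqrt_iff (integral_nonneg fun x => by positivity)).1 hS
  have hint : Integrable (fun x => ‖x - S x‖ ^ 2) μ := by
    have := hm.integrable_norm_pow (p := 2) (by simp)
    simpa using this
  let R := S.range.filter (fun s => 0 < μ.real (S ⁻¹' {s}))
  let e := R.equivFin
  let v : Fin R.card → E := fun i => (e.symm i : E)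
  have hvinj : Function.Injective v := fun i j hij => e.symm.injective (Subtype.ext hij)
  have hB : ∀ i, MeasurableSet (S ⁻¹' {v i}) := fun i => S.measurableSet_preimage _
  have hdis : Pairwise (Function.onFun Disjoint fun i => S ⁻¹' {v i}) := by
    intro i j hij
    refine Disjoint.preimage _ ?_
    simpa using fun h => hij (hvinj h)
  refine ⟨Fin R.card, inferInstance, fun i => S ⁻¹' {v i}, v, hB, hdis, ?_, ?_, ?_⟩
  · intro i
    have := (e.symm i).2
    exact (Finset.mem_filter.1 this).2
  · have : ∀ s ∈ S.range, ∀ᵐ x ∂μ, S x = s → s ∈ R := by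
      intro s hs
      by_cases hp : 0 < μ.real (S ⁻¹' {s})
      · exact ae_of_all _ fun x _ => Finset.mem_filter.2 ⟨hs, hp⟩
      · have h0 : μ (S ⁻¹' {s}) = 0 := by
          have : μ.real (S ⁻¹' {s}) = 0 := le_antisymm (not_lt.1 hp) measureReal_nonneg
          rwa [measureReal_eq_zero_iff] at this
        filter_upwards [measure_eq_zero_iff_ae_notMem.1 h0] with x hx hxs
        exact absurd hxs hx
    have := (ae_ball_iff (μ := μ) S.range.countable_toSet (p := fun x s _ => S x = s → s ∈ R)).2 this
    filter_upwards [this] with x hx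
    have hxR := hx (S x) (S.mem_range_self x) rfl
    refine Set.mem_iUnion.2 ⟨e ⟨S x, hxR⟩, ?_⟩
    simp [v]
  · have h2 : ∀ i, ∫ x in S ⁻¹' {v i}, ‖x - v i‖ ^ 2 ∂μ = ∫ x in S ⁻¹' {v i}, ‖x - S x‖ ^ 2 ∂μ := by
      intro i
      refine setIntegral_congr_fun (hB i) fun x hx => ?_
      have : S x = v i := hx
      simp [this]
    simp_rw [h2]
    rw [← integral_iUnion_fintype hB hdis fun i => hint.integrableOn]
    exact (setIntegral_le_integral hint (ae_of_all _ fun x => by positivity)).trans h1.le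

lemma bddAbove_cost {d : ℕ} (μ ν : Measure (EuclideanSpace ℝ (Fin d)))
    (hμ : Integrable (fun x => ‖x‖ ^ 2) μ) (hν : Integrable (fun y => ‖y‖ ^ 2) ν) :
    BddAbove {r : ℝ | ∃ π ∈ Couplings μ ν, r = ∫ p, ⟪p.1, p.2⟫ ∂π} := by
  refine ⟨∫ x, ‖x‖ ^ 2 ∂μ + ∫ x, ‖x‖ ^ 2 ∂ν, ?_⟩
  rintro r ⟨π, ⟨rfl, rfl⟩, rfl⟩
  rw [integrable_map_measure (by fun_prop) (by fun_prop)] at hμ hν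
  change Integrable (fun p => ‖p.1‖ ^ 2) π at hμ
  change Integrable (fun p => ‖p.2‖ ^ 2) π at hν
  rw [integral_map (by fun_prop) (by fun_prop), integral_map (by fun_prop) (by fun_prop),
    ← integral_add hμ hν]
  refine (le_abs_self _).trans ((abs_integral_le_integral_abs).trans ?_)
  refine integral_mono_of_nonneg (ae_of_all _ fun _ => abs_nonneg _) (hμ.add hν) (ae_of_all _ fun p => ?_)
  have := abs_real_inner_le_norm p.1 p.2
  simp only [Pi.add_apply, Function.comp]
  nlinarith [sq_nonneg (‖p.1‖ - ‖p.2‖), sq_nonneg (‖p.1‖ + ‖p.2‖)]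

lemma exists_coupling {d : ℕ} (μ ν : Measure (EuclideanSpace ℝ (Fin d)))
    [IsProbabilityMeasure μ] [IsProbabilityMeasure ν]
    (hμ : Integrable (fun x : EuclideanSpace ℝ (Fin d) => x) μ)
    (hν : Integrable (fun x : EuclideanSpace ℝ (Fin d) => x) ν)
    {ι : Type} [Fintype ι] (B : ι → Set (EuclideanSpace ℝ (Fin d)))
    (hB : ∀ i, MeasurableSet (B i)) (hd : Pairwise (Function.onFun Disjoint B))
    (hpos : ∀ i, 0 < μ.real (B i)) (hae : ∀ᵐ x ∂μ, x ∈ ⋃ i, B i)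
    (h : ι → EuclideanSpace ℝ (Fin d) → ℝ) (hm : ∀ i, Measurable (h i)) (h0 : ∀ i y, 0 ≤ h i y)
    (h1 : ∀ y, ∑ i, h i y = 1) (hw : ∀ i, ∫ y, h i y ∂ν = μ.real (B i)) :
    ∃ π ∈ Couplings μ ν, ∫ p, ⟪p.1, p.2⟫ ∂π =
      ∑ i, ∫ y, h i y * ⟪(μ.real (B i))⁻¹ • ∫ x in B i, x ∂μ, y⟫ ∂ν := by
  classical
  let ρ : ι → Measure (EuclideanSpace ℝ (Fin d)) := fun i =>
    ν.withDensity (fun y => ((h i y).toNNReal : ENNReal))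
  have hle1 : ∀ i y, h i y ≤ 1 := by
    intro i y
    rw [← h1 y]
    exact Finset.single_le_sum (f := fun i => h i y) (fun j _ => h0 j y) (Finset.mem_univ i)
  have hint : ∀ i, Integrable (h i) ν := by
    intro i
    refine Integrable.of_bound (hm i).aestronglyMeasurable 1 (ae_of_all _ fun y => ?_)
    rw [Real.norm_eq_abs, abs_of_nonneg (h0 i y)]
    exact hle1 i y
  have hρ1 : ∀ i, ρ i Set.univ = μ (B i) := by
    intro i
    simp only [ρ]
    rw [withDensity_apply _ MeasurableSet.univ, Measure.restrict_univ]
    change ∫⁻ y, ENNReal.ofReal (h i y) ∂ν = _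
    rw [← ofReal_integral_eq_lintegral_ofReal (hint i) (ae_of_all _ (h0 i)), hw,
      ofReal_measureReal]
  have hρfin : ∀ i, IsFiniteMeasure (ρ i) := fun i => ⟨by rw [hρ1]; exact measure_lt_top _ _⟩
  have hpos' : ∀ i, μ (B i) ≠ 0 := fun i hi => by
    have := hpos i
    simp [Measure.real, hi] at this
  have hsumρ : ∑ i, ρ i = ν := by
    ext s hs
    rw [Measure.finsetSum_apply]
    simp only [ρ]
    simp_rw [withDensity_apply _ hs]
    rw [← lintegral_finsetSum _ fun i _ => (hm i).real_toNNReal.coe_nnreal_ennreal]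
    have : ∀ y, ∑ i, ((h i y).toNNReal : ENNReal) = 1 := by
      intro y
      change ∑ i, ENNReal.ofReal (h i y) = 1
      rw [← ENNReal.ofReal_sum_of_nonneg fun i _ => h0 i y, h1, ENNReal.ofReal_one]
    simp [this]
  have hsumμ : ∑ i, μ.restrict (B i) = μ := by
    rw [← Measure.sum_fintype, ← Measure.restrict_iUnion hd hB]
    exact Measure.restrict_eq_self_of_ae_mem hae
  let π := ∑ i, (μ (B i))⁻¹ • (μ.restrict (B i)).prod (ρ i)
  refine ⟨π, ⟨?_, ?_⟩, ?_⟩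
  · simp only [π]
    rw [Measure.map_finset_sum (by fun_prop)]
    simp_rw [Measure.map_smul, Measure.map_fst_prod, hρ1, smul_smul,
      ENNReal.inv_mul_cancel (hpos' _) (measure_ne_top _ _), one_smul]
    exact hsumμ
  · simp only [π]
    rw [Measure.map_finset_sum (by fun_prop)]
    simp_rw [Measure.map_smul, Measure.map_snd_prod, Measure.restrict_apply_univ, smul_smul,
      ENNReal.inv_mul_cancel (hpos' _) (measure_ne_top _ _), one_smul]
    exact hsumρ
  · have hνρ : ∀ i, Integrable (fun x : EuclideanSpace ℝ (Fin d) => x) (ρ i) := by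
      intro i
      rw [← hsumρ] at hν
      exact (integrable_finsetSum_measure.1 hν) i (Finset.mem_univ i)
    have hp : ∀ i, Integrable (fun p : EuclideanSpace ℝ (Fin d) × EuclideanSpace ℝ (Fin d) =>
        ⟪p.1, p.2⟫) ((μ.restrict (B i)).prod (ρ i)) := by
      intro i
      refine Integrable.op_fst_snd (op := fun x y : EuclideanSpace ℝ (Fin d) => ⟪x, y⟫)
        (f := fun x => x) (g := fun x => x) ?_ ⟨1, fun x y => ?_⟩ hμ.integrableOn (hνρ i)
      · exact continuous_inner
      · rw [one_mul]; exact norm_inner_le_norm x y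
    simp only [π]
    rw [integral_finsetSum_measure fun i _ => (hp i).smul_measure (by simp [hpos'])]
    refine Finset.sum_congr rfl fun i _ => ?_
    rw [integral_smul_measure, integral_prod _ (hp i)]
    simp only
    have e1 : ∀ x : EuclideanSpace ℝ (Fin d), ∫ y, ⟪x, y⟫ ∂(ρ i) = ⟪∫ y, y ∂(ρ i), x⟫ := by
      intro x
      rw [integral_inner (hνρ i) x, real_inner_comm]
    simp_rw [e1]
    rw [integral_inner hμ.integrableOn]
    have e2 : ∀ x : EuclideanSpace ℝ (Fin d), ∫ y, h i y * ⟪x, y⟫ ∂ν = ⟪x, ∫ y, y ∂(ρ i)⟫ := by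
      intro x
      rw [← integral_inner (hνρ i) x]
      simp only [ρ]
      rw [integral_withDensity_eq_integral_smul (hm i).real_toNNReal]
      congr 1; ext y
      rw [NNReal.smul_def, Real.coe_toNNReal _ (h0 i y), smul_eq_mul]
    rw [e2, inner_smul_left, real_inner_comm]
    simp [Measure.real, ENNReal.toReal_inv]

lemma exists_good_coupling {d : ℕ}
    (μ ν : Measure (EuclideanSpace ℝ (Fin d)))
    [IsProbabilityMeasure μ] [IsProbabilityMeasure ν]
    (hμ : Integrable (fun x => ‖x‖ ^ 2) μ) (hν : Integrable (fun y => ‖y‖ ^ 2) ν)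
    (h : ConvexOrder μ ν) (ε : ℝ) (hε : 0 < ε) :
    ∃ π ∈ Couplings μ ν, ∫ x, ‖x‖ ^ 2 ∂μ - ε - ε ≤ ∫ p, ⟪p.1, p.2⟫ ∂π := by
  classical
  have hμ2 : MemLp (fun x : EuclideanSpace ℝ (Fin d) => x) 2 μ :=
    (memLp_two_iff_integrable_sq_norm (by fun_prop)).2 hμ
  have hν2 : MemLp (fun x : EuclideanSpace ℝ (Fin d) => x) 2 ν :=
    (memLp_two_iff_integrable_sq_norm (by fun_prop)).2 hν
  have hμ1 := hμ2.integrable (by norm_num)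
  have hν1 := hν2.integrable (by norm_num)
  obtain ⟨ι, _, B, s, hB, hd, hpos, hae, hs⟩ := exists_partition μ hμ2 ε hε
  have hsplit : ∀ f : EuclideanSpace ℝ (Fin d) → ℝ, Integrable f μ →
      ∫ x, f x ∂μ = ∑ i, ∫ x in B i, f x ∂μ := by
    intro f hf
    rw [← integral_iUnion_fintype hB hd fun i => hf.integrableOn,
      Measure.restrict_eq_self_of_ae_mem hae]
  set w : ι → ℝ := fun i => μ.real (B i) with hw
  have hw1 : ∑ i, w i = 1 := by
    have := hsplit (fun _ => 1) (integrable_const _)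
    simpa [hw] using this.symm
  have : Nonempty ι := by
    by_contra hne
    rw [not_nonempty_iff] at hne
    simp at hw1
  set b : ι → EuclideanSpace ℝ (Fin d) := fun i => (w i)⁻¹ • ∫ x in B i, x ∂μ with hb
  have hbx : ∀ i, ∫ x in B i, x ∂μ = w i • b i := by
    intro i
    simp only [hb]
    rw [smul_smul, mul_inv_cancel₀ (hpos i).ne', one_smul]
  have hin : ∀ i (z : EuclideanSpace ℝ (Fin d)), ∫ x in B i, ⟪z, x⟫ ∂μ = w i * ⟪z, b i⟫ := by
    intro i z
    rw [integral_inner hμ1.integrableOn, hbx, inner_smul_right]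
  have hiμ : ∀ z : EuclideanSpace ℝ (Fin d), Integrable (fun x => ⟪z, x⟫) μ :=
    fun z => hμ1.const_inner z
  have hiν : ∀ z : EuclideanSpace ℝ (Fin d), Integrable (fun x => ⟪z, x⟫) ν :=
    fun z => hν1.const_inner z
  have hdual : ∀ g : ι → ℝ, ∑ i, w i * ‖b i‖ ^ 2 ≤ ∑ i, w i * g i +
      ∫ y, Finset.univ.sup' Finset.univ_nonempty (fun i => ⟪b i, y⟫ - g i) ∂ν := by
    intro g
    set F : EuclideanSpace ℝ (Fin d) → ℝ :=
      fun y => Finset.univ.sup' Finset.univ_nonempty (fun i => ⟪b i, y⟫ - g i) with hF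
    have hFle : ∀ i y, ⟪b i, y⟫ - g i ≤ F y := fun i y =>
      Finset.le_sup' (fun i => ⟪b i, y⟫ - g i) (Finset.mem_univ i)
    have hFc : Continuous F :=
      Continuous.finset_sup'_apply _ fun i _ => by fun_prop
    have hFint : ∀ (m : Measure (EuclideanSpace ℝ (Fin d))) [IsProbabilityMeasure m],
        (∀ z : EuclideanSpace ℝ (Fin d), Integrable (fun x => ⟪z, x⟫) m) → Integrable F m := by
      intro m _ hz
      have hsum : Integrable (fun y => ∑ i, |⟪b i, y⟫ - g i|) m :=
        integrable_finsetSum _ fun i _ => ((hz (b i)).sub (integrable_const (g i))).abs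
      refine hsum.mono' hFc.aestronglyMeasurable (ae_of_all _ fun y => ?_)
      obtain ⟨i, -, hi⟩ := Finset.exists_mem_eq_sup' (Finset.univ_nonempty (α := ι))
        (fun i => ⟪b i, y⟫ - g i)
      change ‖Finset.univ.sup' Finset.univ_nonempty (fun i => ⟪b i, y⟫ - g i)‖ ≤ _
      rw [hi, Real.norm_eq_abs]
      exact Finset.single_le_sum (f := fun i => |⟪b i, y⟫ - g i|) (fun j _ => abs_nonneg _)
        (Finset.mem_univ i)
    have hconv : ConvexOn ℝ Set.univ F := by
      refine ⟨convex_univ, fun x _ y _ s t hs ht hst => ?_⟩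
      refine Finset.sup'_le _ _ fun i _ => ?_
      rw [inner_add_right, inner_smul_right, inner_smul_right, smul_eq_mul, smul_eq_mul]
      have e1 := mul_le_mul_of_nonneg_left (hFle i x) hs
      have e2 := mul_le_mul_of_nonneg_left (hFle i y) ht
      have e3 : g i = s * g i + t * g i := by rw [← add_mul, hst, one_mul]
      linarith
    have hFμ := hFint μ hiμ
    have key := h F hconv hFμ (hFint ν hiν)
    rw [hsplit F hFμ] at key
    have : ∑ i, (w i * ‖b i‖ ^ 2 - w i * g i) ≤ ∑ i, ∫ x in B i, F x ∂μ := by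
      refine Finset.sum_le_sum fun i _ => ?_
      have e : ∫ x in B i, (⟪b i, x⟫ - g i) ∂μ = w i * ‖b i‖ ^ 2 - w i * g i := by
        rw [integral_sub (hiμ (b i)).integrableOn (integrable_const _), hin,
          real_inner_self_eq_norm_sq]
        simp [hw]
      rw [← e]
      exact integral_mono (((hiμ (b i)).sub (integrable_const _)).integrableOn) hFμ.integrableOn
        (hFle i)
    rw [Finset.sum_sub_distrib] at this
    linarith
  obtain ⟨k, hk1, hk2, hk3, hk4, hk5⟩ := semi ν (fun i y => ⟪b i, y⟫) (fun i => by fun_prop)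
    (fun i => hiν (b i)) w hpos hw1 _ hdual ε hε
  obtain ⟨π, hπ, hπc⟩ := exists_coupling μ ν hμ1 hν1 B hB hd hpos hae k hk1 hk2 hk3 hk4
  refine ⟨π, hπ, ?_⟩
  rw [hπc]
  refine le_trans ?_ hk5
  have : ∑ i, (∫ x in B i, ‖x‖ ^ 2 ∂μ - w i * ‖b i‖ ^ 2) ≤ ε := by
    refine le_trans (Finset.sum_le_sum fun i _ => ?_) hs
    have e : ∫ x in B i, ‖x - s i‖ ^ 2 ∂μ
        = ∫ x in B i, ‖x‖ ^ 2 ∂μ - 2 * (w i * ⟪s i, b i⟫) + w i * ‖s i‖ ^ 2 := by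
      rw [← hin, ← integral_const_mul]
      have c1 : Integrable (fun x => 2 * ⟪s i, x⟫) (μ.restrict (B i)) :=
        ((hiμ (s i)).const_mul 2).integrableOn
      have c2 : w i * ‖s i‖ ^ 2 = ∫ x in B i, ‖s i‖ ^ 2 ∂μ := by simp [hw]
      have c0 : Integrable (fun x => ‖x‖ ^ 2) (μ.restrict (B i)) := hμ.integrableOn
      have c3 : Integrable (fun x => ‖x‖ ^ 2 - 2 * ⟪s i, x⟫) (μ.restrict (B i)) := c0.sub c1
      rw [c2, ← integral_sub c0 c1, ← integral_add c3 (integrable_const _)]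
      congr 1; ext x
      rw [norm_sub_sq_real, real_inner_comm]
    rw [e]
    have := mul_nonneg (hpos i).le (sq_nonneg ‖s i - b i‖)
    rw [norm_sub_sq_real] at this
    simp only [hw] at this ⊢
    linarith
  rw [Finset.sum_sub_distrib, ← hsplit _ hμ] at this
  linarith

theorem stmt7 (d : ℕ) (hd : 1 ≤ d)
    (μ ν : Measure (EuclideanSpace ℝ (Fin d)))
    [IsProbabilityMeasure μ] [IsProbabilityMeasure ν]
    (hμ : Integrable (fun x => ‖x‖ ^ 2) μ) (hν : Integrable (fun y => ‖y‖ ^ 2) ν)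
    (h : ConvexOrder μ ν) :
    ∫ x, ‖x‖ ^ 2 ∂μ ≤ OTcost μ ν := by
  refine le_of_forall_pos_le_add fun ε hε => ?_
  obtain ⟨π, hπ, hle⟩ := exists_good_coupling μ ν hμ hν h (ε / 2) (by positivity)
  have := le_csSup (bddAbove_cost μ ν hμ hν) ⟨π, hπ, rfl⟩
  unfold OTcost
  linarith
end
end

section
/- Let d ≥ 1 and let μ, ν be Borel probability measures on ℝ^d with finite first moments. Then the infimum, taken over all convex functions f : ℝ^d → ℝ that are integrable with respect to both μ and ν, of (∫ f dν − ∫ f dμ), equals the infimum over all Borel probability measures ρ on ℝ^d with bounded support of (C(ν,ρ) − C(μ,ρ)), where both infima are taken in the extended reals [−∞, ∞]. -/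
open MeasureTheory Metric RealInnerProductSpace

noncomputable section

set_option linter.unusedSectionVars false

section Generic

open scoped CompactlySupported BoundedContinuousFunction NNReal ENNReal
open Filter Topology

variable {E : Type*} [NormedAddCommGroup E] [InnerProductSpace ℝ E] [FiniteDimensional ℝ E]
  [MeasurableSpace E] [BorelSpace E]

lemma aux_int_pair {π : Measure (E × E)} {α ρ : Measure E}
    (h1 : π.map Prod.fst = α) (h2 : π.map Prod.snd = ρ)
    (hα : Integrable (fun x => ‖x‖) α) {R : ℝ} (hρ : ∀ᵐ y ∂ρ, ‖y‖ ≤ R) :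
    Integrable (fun p : E × E => ⟪p.1, p.2⟫) π := by
  subst h1; subst h2
  have hi : Integrable (fun p : E × E => ‖p.1‖) π :=
    hα.comp_measurable measurable_fst
  have hb : ∀ᵐ p ∂π, ‖p.2‖ ≤ R := ae_of_ae_map measurable_snd.aemeasurable hρ
  refine (hi.mul_const R).mono' (by fun_prop) ?_
  filter_upwards [hb] with p hp
  calc ‖⟪p.1, p.2⟫‖ ≤ ‖p.1‖ * ‖p.2‖ := norm_inner_le_norm _ _
    _ ≤ _ := by gcongr

lemma aux_pair_le {π : Measure (E × E)} {α ρ : Measure E}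
    (h1 : π.map Prod.fst = α) (h2 : π.map Prod.snd = ρ)
    (hα : Integrable (fun x => ‖x‖) α) {R : ℝ} (hρ : ∀ᵐ y ∂ρ, ‖y‖ ≤ R)
    {f g : E → ℝ} (hf : Integrable f α) (hg : Integrable g ρ)
    (h : ∀ᵐ y ∂ρ, ∀ x, ⟪x, y⟫ ≤ f x - g y) :
    ∫ p, ⟪p.1, p.2⟫ ∂π ≤ ∫ x, f x ∂α - ∫ y, g y ∂ρ := by
  have hi := aux_int_pair h1 h2 hα hρ
  subst h1; subst h2
  have hb : ∀ᵐ p ∂π, ∀ x, ⟪x, p.2⟫ ≤ f x - g p.2 := ae_of_ae_map measurable_snd.aemeasurable h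
  have hf' : Integrable (fun p : E × E => f p.1) π := hf.comp_measurable measurable_fst
  have hg' : Integrable (fun p : E × E => g p.2) π := hg.comp_measurable measurable_snd
  rw [integral_map measurable_fst.aemeasurable hf.1, integral_map measurable_snd.aemeasurable hg.1,
    ← integral_sub hf' hg']
  refine integral_mono_ae hi (hf'.sub hg') ?_
  filter_upwards [hb] with p hp
  exact hp _

/-- Hahn-Banach for a sublinear functional, touching at a point. -/
lemma aux_hb {V : Type*} [AddCommGroup V] [Module ℝ V] (N : V → ℝ)
    (N_hom : ∀ c : ℝ, 0 < c → ∀ x, N (c • x) = c * N x)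
    (N_add : ∀ x y, N (x + y) ≤ N x + N y) (v : V) :
    ∃ g : V →ₗ[ℝ] ℝ, g v = N v ∧ ∀ x, g x ≤ N x := by
  have N0 : N 0 = 0 := by
    have := N_hom 2 (by norm_num) 0
    rw [smul_zero] at this; linarith
  have H : ∀ c : ℝ, c • v = 0 → (RingHom.id ℝ) c • N v = 0 := by
    intro c hc
    rcases smul_eq_zero.1 hc with h | h
    · simp [h]
    · simp [h, N0]
  obtain ⟨g, hg, hg'⟩ := exists_extension_of_le_sublinear
    (LinearPMap.mkSpanSingleton' (σ := RingHom.id ℝ) v (N v) H) N N_hom N_add (by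
      rintro ⟨x, hx⟩
      obtain ⟨t, rfl⟩ := Submodule.mem_span_singleton.1 hx
      rw [LinearPMap.mkSpanSingleton'_apply]
      simp only [RingHom.id_apply, smul_eq_mul]
      rcases lt_trichotomy t 0 with h | h | h
      · have e : N (t • v) = (-t) * N (-v) := by
          rw [← N_hom (-t) (by linarith)]; simp
        have := N_add v (-v)
        rw [add_neg_cancel, N0] at this
        rw [e]; nlinarith
      · simp [h, N0]
      · rw [N_hom t h])
  refine ⟨g, ?_, hg'⟩
  have := hg ⟨v, Submodule.mem_span_singleton_self v⟩
  have e := LinearPMap.mkSpanSingleton'_apply (σ := RingHom.id ℝ) v (N v) H 1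
    (by simp)
  simp only [one_smul, RingHom.id_apply] at e
  rw [this]; simpa using e

/-- Fibrewise supremum. -/
def supK (K : Set E) (h : E × E → ℝ) (x : E) : ℝ := sSup ((fun y => h (x, y)) '' K)

/-- Continuous functions with linear growth in the first variable, uniformly on `K`. -/
def VK (K : Set E) : Submodule ℝ (E × E → ℝ) where
  carrier := {h | Continuous h ∧ ∃ C : ℝ, ∀ x, ∀ y ∈ K, |h (x, y)| ≤ C * (1 + ‖x‖)}
  add_mem' := by
    rintro a b ⟨ha, C, hC⟩ ⟨hb, D, hD⟩
    refine ⟨ha.add hb, C + D, fun x y hy => ?_⟩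
    have := hC x y hy
    have := hD x y hy
    have := abs_add_le (a (x, y)) (b (x, y))
    simp only [Pi.add_apply]
    linarith
  zero_mem' := ⟨continuous_zero, 0, by simp⟩
  smul_mem' := by
    rintro c a ⟨ha, C, hC⟩
    refine ⟨ha.const_smul c, |c| * C, fun x y hy => ?_⟩
    have := hC x y hy
    simp only [Pi.smul_apply, smul_eq_mul, abs_mul]
    rw [mul_assoc]; gcongr

variable {K : Set E}

lemma supK_cont (hK : IsCompact K) {h : E × E → ℝ} (hh : Continuous h) : Continuous (supK K h) := by
  exact hK.continuous_sSup (f := fun x y => h (x, y)) hh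

lemma le_supK (hK : IsCompact K) {h : E × E → ℝ} (hh : Continuous h) (x : E) {y : E} (hy : y ∈ K) :
    h (x, y) ≤ supK K h x :=
  le_csSup (hK.bddAbove_image (by fun_prop)) ⟨y, hy, rfl⟩

lemma supK_le (hK0 : K.Nonempty) {h : E × E → ℝ} (x : E) {B : ℝ} (hB : ∀ y ∈ K, h (x, y) ≤ B) :
    supK K h x ≤ B :=
  csSup_le (hK0.image _) (by rintro _ ⟨y, hy, rfl⟩; exact hB y hy)

lemma abs_supK_le (hK : IsCompact K) (hK0 : K.Nonempty) 
    {h : E × E → ℝ} (hh : Continuous h) (x : E) {B : ℝ}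
    (hB : ∀ y ∈ K, |h (x, y)| ≤ B) : |supK K h x| ≤ B := by
  obtain ⟨y, hy⟩ := hK0
  refine abs_le.2 ⟨?_, supK_le ⟨y, hy⟩ x fun y hy => (abs_le.1 (hB y hy)).2⟩
  exact (abs_le.1 (hB y hy)).1.trans (le_supK hK hh x hy)

lemma supK_int (hK : IsCompact K) (hK0 : K.Nonempty) 
    {ν : Measure E} [IsProbabilityMeasure ν] (hν : Integrable (fun x => ‖x‖) ν)
    {h : E × E → ℝ} (hh : h ∈ VK K) : Integrable (supK K h) ν := by
  obtain ⟨hc, C, hC⟩ := hh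
  refine (((integrable_const (1 : ℝ)).add hν).const_mul C).mono'
    (supK_cont hK hc).aestronglyMeasurable (ae_of_all _ fun x => ?_)
  exact abs_supK_le hK hK0 hc x (hC x)

/-- Representation of a functional dominated by `h ↦ ∫ sup_K h dν`. -/
lemma aux_rmk (hK : IsCompact K) (hK0 : K.Nonempty) 
    {ν : Measure E} [IsProbabilityMeasure ν] (hν : Integrable (fun x => ‖x‖) ν)
    (L : VK K →ₗ[ℝ] ℝ) (hL : ∀ h : VK K, L h ≤ ∫ x, supK K h x ∂ν) :
    ∃ π : Measure (E × E), ∀ h : VK K, (∀ p, 0 ≤ h.1 p) →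
      ∫⁻ p, ENNReal.ofReal (h.1 p) ∂π = ENNReal.ofReal (L h) := by
  have hpos : ∀ h : VK K, (∀ p, 0 ≤ h.1 p) → 0 ≤ L h := by
    intro h hh
    have h1 := hL (-h)
    rw [map_neg] at h1
    have h2 : ∫ x, supK K (-h : VK K) x ∂ν ≤ 0 := by
      refine integral_nonpos fun x => supK_le hK0 x fun y _ => ?_
      simpa using hh (x, y)
    linarith
  have hmem : ∀ k : C_c(E × E, ℝ), (k : E × E → ℝ) ∈ VK K := by
    intro k
    obtain ⟨C, hC⟩ := k.hasCompactSupport.exists_bound_of_continuous k.continuous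
    refine ⟨k.continuous, C, fun x y _ => (hC _).trans ?_⟩
    have : 0 ≤ C := (norm_nonneg _).trans (hC 0)
    nlinarith [norm_nonneg x]
  let L0 : C_c(E × E, ℝ) →ₗ[ℝ] ℝ :=
    { toFun := fun k => L ⟨k, hmem k⟩
      map_add' := fun a b => by rw [← map_add]; rfl
      map_smul' := fun a b => by rw [← map_smul]; rfl }
  let L1 : C_c(E × E, ℝ) →ₚ[ℝ] ℝ := PositiveLinearMap.mk₀ L0 (fun k hk => hpos _ fun p => hk p)
  have hL1 : ∀ k, L1 k = L ⟨k, hmem k⟩ := fun k => rfl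
  refine ⟨RealRMK.rieszMeasure L1, fun h hh => ?_⟩
  obtain ⟨h, hc, C, hC⟩ := h
  simp only at hh ⊢
  let χ : ℕ → E × E → ℝ := fun n p => max 0 (min 1 (n + 1 - ‖p‖))
  have χc : ∀ n, Continuous (χ n) := fun n => by fun_prop
  have χ0 : ∀ n p, 0 ≤ χ n p := fun n p => le_max_left _ _
  have χ1 : ∀ n p, χ n p ≤ 1 := fun n p => by simp [χ]
  have χe : ∀ (n : ℕ) p, ‖p‖ ≤ n → χ n p = 1 := fun n p hp => by
    simp only [χ]; rw [min_eq_left (by linarith)]; simp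
  have χs : ∀ n, HasCompactSupport (χ n) := fun n => by
    refine HasCompactSupport.intro (isCompact_closedBall (0 : E × E) (n + 1)) fun p hp => ?_
    simp only [mem_closedBall, dist_zero_right, not_le] at hp
    simp only [χ]
    rw [max_eq_left]
    exact (min_le_right _ _).trans (by linarith)
  have χm : ∀ p, Monotone fun n => χ n p := fun p a b hab => by
    have : (a : ℝ) ≤ b := by exact_mod_cast hab
    simp only [χ]; gcongr
  let k : ℕ → C_c(E × E, ℝ) := fun n =>
    ⟨⟨fun p => χ n p * h p, (χc n).mul hc⟩, (χs n).mul_right⟩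
  have hk : ∀ n p, k n p = χ n p * h p := fun n p => rfl
  have hkint : ∀ n, ∫⁻ p, ENNReal.ofReal (k n p) ∂(RealRMK.rieszMeasure L1) =
      ENNReal.ofReal (L ⟨k n, hmem _⟩) := by
    intro n
    rw [← hL1, ← RealRMK.integral_rieszMeasure L1 (k n), ofReal_integral_eq_lintegral_ofReal]
    · exact (k n).continuous.integrable_of_hasCompactSupport (k n).hasCompactSupport
    · exact ae_of_all _ fun p => mul_nonneg (χ0 n p) (hh p)
  have lim1 : Tendsto (fun n => ∫⁻ p, ENNReal.ofReal (k n p) ∂(RealRMK.rieszMeasure L1)) atTop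
      (𝓝 (∫⁻ p, ENNReal.ofReal (h p) ∂(RealRMK.rieszMeasure L1))) := by
    refine lintegral_tendsto_of_tendsto_of_monotone (fun n => ?_) (ae_of_all _ fun p => ?_)
      (ae_of_all _ fun p => ?_)
    · exact (k n).continuous.measurable.ennreal_ofReal.aemeasurable
    · intro a b hab
      refine ENNReal.ofReal_le_ofReal ?_
      rw [hk, hk]
      exact mul_le_mul_of_nonneg_right (χm p hab) (hh p)
    · refine tendsto_const_nhds.congr' ?_
      obtain ⟨N, hN⟩ := exists_nat_ge ‖p‖
      filter_upwards [eventually_ge_atTop N] with n hn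
      rw [hk, χe, one_mul]
      exact hN.trans (by exact_mod_cast hn)
  let V0 : VK K := ⟨h, hc, C, hC⟩
  let kk : ℕ → VK K := fun n => ⟨k n, hmem _⟩
  have hdiff : ∀ n p, (V0 - kk n).1 p = (1 - χ n p) * h p := fun n p => by
    change h p - χ n p * h p = _
    ring
  have lim0 : Tendsto (fun n => ∫ x, supK K (V0 - kk n).1 x ∂ν) atTop (𝓝 0) := by
    have : (0 : ℝ) = ∫ x : E, (0 : ℝ) ∂ν := by simp
    rw [this]
    refine tendsto_integral_of_dominated_convergence (fun x => C * (1 + ‖x‖)) (fun n => ?_)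
      (((integrable_const (1 : ℝ)).add hν).const_mul C) (fun n => ae_of_all _ fun x => ?_)
      (ae_of_all _ fun x => ?_)
    · exact (supK_cont hK (V0 - kk n).2.1).aestronglyMeasurable
    · refine abs_supK_le hK hK0 (V0 - kk n).2.1 x fun y hy => ?_
      rw [hdiff, abs_mul]
      refine le_trans ?_ (hC x y hy)
      have : |1 - χ n (x, y)| ≤ 1 := abs_le.2 ⟨by linarith [χ1 n (x, y)], by linarith [χ0 n (x, y)]⟩
      exact mul_le_of_le_one_left (abs_nonneg _) this
    · obtain ⟨R, hR⟩ := hK.isBounded.exists_norm_le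
      obtain ⟨N, hN⟩ := exists_nat_ge (max ‖x‖ R)
      refine tendsto_const_nhds.congr' ?_
      filter_upwards [eventually_ge_atTop N] with n hn
      have hn' : (N : ℝ) ≤ n := by exact_mod_cast hn
      have : |supK K (V0 - kk n).1 x| ≤ 0 := by
        refine abs_supK_le hK hK0 (V0 - kk n).2.1 x fun y hy => ?_
        rw [hdiff, χe]
        · simp
        · rw [Prod.norm_def]
          exact (max_le_max le_rfl (hR y hy)).trans (hN.trans hn')
      exact (abs_eq_zero.1 (le_antisymm this (abs_nonneg _))).symm
  have lim2 : Tendsto (fun n => L (V0 - kk n)) atTop (𝓝 0) := by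
    refine squeeze_zero (fun n => hpos _ fun p => ?_) (fun n => hL _) lim0
    rw [hdiff]
    exact mul_nonneg (by linarith [χ1 n p]) (hh p)
  have lim3 : Tendsto (fun n => L (kk n)) atTop (𝓝 (L V0)) := by
    have := lim2.const_sub (L V0)
    simpa using this
  have lim4 := ENNReal.tendsto_ofReal lim3
  simp only [hkint] at lim1
  exact tendsto_nhds_unique lim1 lim4

/-- A bounded continuous function of the second variable as an element of `VK K`. -/
def sndV (K : Set E) (g : E →ᵇ ℝ) : VK K :=
  ⟨fun p => g p.2, by fun_prop, ‖g‖, fun x y _ => by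
    have h1 : |g y| ≤ ‖g‖ := g.norm_coe_le_norm y
    have := norm_nonneg g
    have := norm_nonneg x
    nlinarith⟩

/-- A bounded continuous function of the first variable as an element of `VK K`. -/
def fstV (K : Set E) (g : E →ᵇ ℝ) : VK K :=
  ⟨fun p => g p.1, by fun_prop, ‖g‖, fun x y _ => by
    have h1 : |g x| ≤ ‖g‖ := g.norm_coe_le_norm x
    have := norm_nonneg g
    have := norm_nonneg x
    nlinarith⟩

/-- The dual objective. -/
def dualJ (ν ρ : Measure E) (h : VK K) (g : E →ᵇ ℝ) : ℝ :=
  ∫ x, supK K (h + sndV K g : VK K).1 x ∂ν - ∫ y, g y ∂ρ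

lemma dualJ_bdd (hK : IsCompact K) (hK0 : K.Nonempty) {ν ρ : Measure E} [IsProbabilityMeasure ν]
    [IsProbabilityMeasure ρ] (hν : Integrable (fun x => ‖x‖) ν) (hρ : ∀ᵐ y ∂ρ, y ∈ K) (h : VK K) :
    BddBelow (Set.range (dualJ ν ρ h)) := by
  obtain ⟨hc, C, hC⟩ := h.2
  refine ⟨-∫ x, C * (1 + ‖x‖) ∂ν, ?_⟩
  rintro _ ⟨g, rfl⟩
  have hCi : Integrable (fun x => C * (1 + ‖x‖)) ν :=
    ((integrable_const (1 : ℝ)).add hν).const_mul C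
  have key : ∀ y ∈ K, g y ≤ ∫ x, supK K (h + sndV K g : VK K).1 x ∂ν + ∫ x, C * (1 + ‖x‖) ∂ν := by
    intro y hy
    have hi := supK_int hK hK0 hν (h + sndV K g : VK K).2
    rw [← integral_add hi hCi]
    have : g y = ∫ x, g y ∂ν := by simp
    rw [this]
    refine integral_mono (integrable_const _) (hi.add hCi) fun x => ?_
    have h1 := le_supK hK (h + sndV K g : VK K).2.1 x hy
    have h2 := (abs_le.1 (hC x y hy)).1
    change h.1 (x, y) + g y ≤ _ at h1
    simp only
    linarith
  have : ∫ y, g y ∂ρ ≤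
      ∫ y, (∫ x, supK K (h + sndV K g : VK K).1 x ∂ν + ∫ x, C * (1 + ‖x‖) ∂ν) ∂ρ := by
    refine integral_mono_ae (g.integrable ρ) (integrable_const _) ?_
    filter_upwards [hρ] with y hy using key y hy
  rw [integral_const] at this
  simp only [probReal_univ, one_smul] at this
  unfold dualJ
  linarith

lemma supK_smul_le (hK : IsCompact K) (hK0 : K.Nonempty) (t : ℝ) (ht : 0 < t) (h : VK K)
    (g : E →ᵇ ℝ) (x : E) :
    supK K (t • h + sndV K (t • g) : VK K).1 x ≤ t * supK K (h + sndV K g : VK K).1 x := by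
  refine supK_le hK0 x fun y hy => ?_
  have : h.1 (x, y) + g y ≤ supK K (h + sndV K g : VK K).1 x :=
    le_supK hK (h + sndV K g : VK K).2.1 x hy
  have e : (t • h + sndV K (t • g) : VK K).1 (x, y) = t * (h.1 (x, y) + g y) := by
    rw [mul_add]; rfl
  rw [e]
  exact mul_le_mul_of_nonneg_left this ht.le

lemma supK_add_le (hK : IsCompact K) (hK0 : K.Nonempty) (h₁ h₂ : VK K)
    (g₁ g₂ : E →ᵇ ℝ) (x : E) :
    supK K (h₁ + h₂ + sndV K (g₁ + g₂) : VK K).1 x ≤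
      supK K (h₁ + sndV K g₁ : VK K).1 x + supK K (h₂ + sndV K g₂ : VK K).1 x := by
  refine supK_le hK0 x fun y hy => ?_
  have a1 : h₁.1 (x, y) + g₁ y ≤ supK K (h₁ + sndV K g₁ : VK K).1 x :=
    le_supK hK (h₁ + sndV K g₁ : VK K).2.1 x hy
  have a2 : h₂.1 (x, y) + g₂ y ≤ supK K (h₂ + sndV K g₂ : VK K).1 x :=
    le_supK hK (h₂ + sndV K g₂ : VK K).2.1 x hy
  have e : (h₁ + h₂ + sndV K (g₁ + g₂) : VK K).1 (x, y) =
    h₁.1 (x, y) + h₂.1 (x, y) + (g₁ y + g₂ y) := rfl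
  rw [e]
  linarith

lemma dualJ_smul_le (hK : IsCompact K) (hK0 : K.Nonempty) {ν ρ : Measure E} [IsProbabilityMeasure ν]
    [IsProbabilityMeasure ρ] (hν : Integrable (fun x => ‖x‖) ν) (t : ℝ) (ht : 0 < t) (h : VK K)
    (g : E →ᵇ ℝ) : dualJ ν ρ (t • h) (t • g) ≤ t * dualJ ν ρ h g := by
  unfold dualJ
  rw [mul_sub, ← integral_const_mul, ← integral_const_mul]
  have e : ∫ y, t * g y ∂ρ ≤ ∫ y, (t • g) y ∂ρ := le_of_eq rfl
  have i1 := supK_int hK hK0 hν (t • h + sndV K (t • g) : VK K).2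
  have i2 := (supK_int hK hK0 hν (h + sndV K g : VK K).2).const_mul t
  exact sub_le_sub (integral_mono i1 i2 fun x => supK_smul_le hK hK0 t ht h g x) e

lemma dualJ_add_le (hK : IsCompact K) (hK0 : K.Nonempty) {ν ρ : Measure E} [IsProbabilityMeasure ν]
    [IsProbabilityMeasure ρ] (hν : Integrable (fun x => ‖x‖) ν) (h₁ h₂ : VK K) (g₁ g₂ : E →ᵇ ℝ) :
    dualJ ν ρ (h₁ + h₂) (g₁ + g₂) ≤ dualJ ν ρ h₁ g₁ + dualJ ν ρ h₂ g₂ := by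
  unfold dualJ
  have e : ∫ y, (g₁ + g₂) y ∂ρ = ∫ y, g₁ y ∂ρ + ∫ y, g₂ y ∂ρ :=
    integral_add (g₁.integrable ρ) (g₂.integrable ρ)
  have i1 := supK_int hK hK0 hν (h₁ + sndV K g₁ : VK K).2
  have i2 := supK_int hK hK0 hν (h₂ + sndV K g₂ : VK K).2
  have i3 := supK_int hK hK0 hν (h₁ + h₂ + sndV K (g₁ + g₂) : VK K).2
  have := integral_mono i3 (i1.add i2) fun x => supK_add_le hK hK0 h₁ h₂ g₁ g₂ x
  rw [integral_add' i1 i2] at this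
  linarith

/-- The dual value. -/
def dualQ (ν ρ : Measure E) (h : VK K) : ℝ := ⨅ g, dualJ ν ρ h g

lemma dualQ_le (hK : IsCompact K) (hK0 : K.Nonempty) {ν ρ : Measure E} [IsProbabilityMeasure ν]
    [IsProbabilityMeasure ρ] (hν : Integrable (fun x => ‖x‖) ν) (hρ : ∀ᵐ y ∂ρ, y ∈ K)
    (h : VK K) (g : E →ᵇ ℝ) : dualQ ν ρ h ≤ dualJ ν ρ h g :=
  ciInf_le (dualJ_bdd hK hK0 hν hρ h) g

lemma dualQ_smul_le (hK : IsCompact K) (hK0 : K.Nonempty) {ν ρ : Measure E} [IsProbabilityMeasure ν]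
    [IsProbabilityMeasure ρ] (hν : Integrable (fun x => ‖x‖) ν) (hρ : ∀ᵐ y ∂ρ, y ∈ K)
    (t : ℝ) (ht : 0 < t) (h : VK K) :
    dualQ ν ρ (t • h) ≤ t * dualQ ν ρ h := by
  have : dualQ ν ρ (t • h) / t ≤ dualQ ν ρ h := by
    refine le_ciInf fun g => ?_
    rw [div_le_iff₀' ht]
    exact (dualQ_le hK hK0 hν hρ _ (t • g)).trans (dualJ_smul_le hK hK0 hν t ht h g)
  rwa [div_le_iff₀' ht] at this

lemma dualQ_smul (hK : IsCompact K) (hK0 : K.Nonempty) {ν ρ : Measure E} [IsProbabilityMeasure ν]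
    [IsProbabilityMeasure ρ] (hν : Integrable (fun x => ‖x‖) ν) (hρ : ∀ᵐ y ∂ρ, y ∈ K)
    (t : ℝ) (ht : 0 < t) (h : VK K) :
    dualQ ν ρ (t • h) = t * dualQ ν ρ h := by
  refine le_antisymm (dualQ_smul_le hK hK0 hν hρ t ht h) ?_
  have h2 := dualQ_smul_le hK hK0 hν hρ t⁻¹ (inv_pos.2 ht) (t • h)
  have e : t⁻¹ • t • h = h := by
    rw [smul_smul, inv_mul_cancel₀ ht.ne', one_smul]
  rw [e] at h2
  have h3 := mul_le_mul_of_nonneg_left h2 ht.le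
  rwa [mul_inv_cancel_left₀ ht.ne'] at h3

lemma dualQ_add (hK : IsCompact K) (hK0 : K.Nonempty) {ν ρ : Measure E} [IsProbabilityMeasure ν]
    [IsProbabilityMeasure ρ] (hν : Integrable (fun x => ‖x‖) ν) (hρ : ∀ᵐ y ∂ρ, y ∈ K)
    (h₁ h₂ : VK K) :
    dualQ ν ρ (h₁ + h₂) ≤ dualQ ν ρ h₁ + dualQ ν ρ h₂ :=
  le_ciInf_add_ciInf fun g₁ g₂ =>
    (dualQ_le hK hK0 hν hρ _ (g₁ + g₂)).trans (dualJ_add_le hK hK0 hν h₁ h₂ g₁ g₂)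

lemma aux_L0 (hK : IsCompact K) (hK0 : K.Nonempty) {ν ρ : Measure E} [IsProbabilityMeasure ν]
    [IsProbabilityMeasure ρ] (hν : Integrable (fun x => ‖x‖) ν) (hρ : ∀ᵐ y ∂ρ, y ∈ K)
    (c : VK K) :
    ∃ L : VK K →ₗ[ℝ] ℝ, L c = dualQ ν ρ c ∧ ∀ h g, L h ≤ dualJ ν ρ h g := by
  obtain ⟨N, hN⟩ : ∃ N : VK K → ℝ, ∀ h, N h = dualQ ν ρ h := ⟨_, fun _ => rfl⟩
  have hs : ∀ t : ℝ, 0 < t → ∀ h : VK K, N (t • h) = t * N h := by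
    intro t ht h
    rw [hN, hN]
    exact dualQ_smul hK hK0 hν hρ t ht h
  have ha : ∀ a b : VK K, N (a + b) ≤ N a + N b := by
    intro a b
    rw [hN, hN, hN]
    exact dualQ_add hK hK0 hν hρ a b
  obtain ⟨L, hLc, hLQ⟩ := aux_hb N hs ha c
  refine ⟨L, hLc.trans (hN c), fun h g => (hLQ h).trans ?_⟩
  rw [hN]
  exact dualQ_le hK hK0 hν hρ h g

lemma aux_L1 (hK : IsCompact K) (hK0 : K.Nonempty) {ν ρ : Measure E} [IsProbabilityMeasure ν]
    [IsProbabilityMeasure ρ] (hν : Integrable (fun x => ‖x‖) ν) (hρ : ∀ᵐ y ∂ρ, y ∈ K) (c : VK K) :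
    ∃ L : VK K →ₗ[ℝ] ℝ, L c = dualQ ν ρ c ∧ (∀ h : VK K, L h ≤ ∫ x, supK K h x ∂ν) ∧
      (∀ h : VK K, (∀ p, 0 ≤ h.1 p) → 0 ≤ L h) ∧ (∀ u : E →ᵇ ℝ, L (fstV K u) = ∫ x, u x ∂ν) ∧
      ∀ u : E →ᵇ ℝ, L (sndV K u) = ∫ x, u x ∂ρ := by
  obtain ⟨L, hLc, hLQ⟩ := aux_L0 hK hK0 hν hρ c
  have hLP : ∀ h : VK K, L h ≤ ∫ x, supK K h x ∂ν := by
    intro h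
    refine (hLQ h 0).trans (le_of_eq ?_)
    have : h + sndV K 0 = h := by
      ext p; change h.1 p + 0 = _; simp
    unfold dualJ
    rw [this]; simp
  have hpos : ∀ h : VK K, (∀ p, 0 ≤ h.1 p) → 0 ≤ L h := by
    intro h hh
    have h1 := hLP (-h)
    rw [map_neg] at h1
    have h2 : ∫ x, supK K (-h : VK K) x ∂ν ≤ 0 := by
      refine integral_nonpos fun x => supK_le hK0 x fun y _ => ?_
      simpa using hh (x, y)
    linarith
  have hu1 : ∀ u : E →ᵇ ℝ, L (fstV K u) ≤ ∫ x, u x ∂ν := by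
    intro u
    refine (hLP _).trans (integral_mono (supK_int hK hK0 hν (fstV K u).2) (u.integrable ν)
      fun x => supK_le hK0 x fun y _ => le_rfl)
  have hg1 : ∀ u : E →ᵇ ℝ, L (sndV K u) ≤ ∫ x, u x ∂ρ := by
    intro u
    refine (hLQ _ (-u)).trans (le_of_eq ?_)
    have : sndV K u + sndV K (-u) = 0 := by
      ext p; change u p.2 + -u p.2 = 0; simp
    unfold dualJ
    rw [this]
    have e : ∀ x, supK K (0 : VK K).1 x = 0 := fun x => by
      have : |supK K (0 : VK K).1 x| ≤ 0 :=
        abs_supK_le hK hK0 (0 : VK K).2.1 x fun y _ => by simp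
      exact abs_eq_zero.1 (le_antisymm this (abs_nonneg _))
    rw [integral_congr_ae (ae_of_all _ e)]
    simp [integral_neg]
  have hu : ∀ u : E →ᵇ ℝ, L (fstV K u) = ∫ x, u x ∂ν := by
    intro u
    refine le_antisymm (hu1 u) ?_
    have := hu1 (-u)
    have e : fstV K (-u) = - fstV K u := rfl
    rw [e, map_neg] at this
    simp only [BoundedContinuousFunction.coe_neg, Pi.neg_apply, integral_neg] at this
    linarith
  have hg : ∀ u : E →ᵇ ℝ, L (sndV K u) = ∫ x, u x ∂ρ := by
    intro u
    refine le_antisymm (hg1 u) ?_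
    have := hg1 (-u)
    have e : sndV K (-u) = - sndV K u := rfl
    rw [e, map_neg] at this
    simp only [BoundedContinuousFunction.coe_neg, Pi.neg_apply, integral_neg] at this
    linarith
  exact ⟨L, hLc, hLP, hpos, hu, hg⟩

lemma aux_repr (L : VK K →ₗ[ℝ] ℝ) (hpos : ∀ h : VK K, (∀ p, 0 ≤ h.1 p) → 0 ≤ L h)
    {π : Measure (E × E)} (hπ : ∀ h : VK K, (∀ p, 0 ≤ h.1 p) →
      ∫⁻ p, ENNReal.ofReal (h.1 p) ∂π = ENNReal.ofReal (L h)) (c : VK K) :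
    ∫ p, c.1 p ∂π = L c := by
  obtain ⟨cc, C, hC⟩ := c.2
  let cp : VK K := ⟨fun p => max (c.1 p) 0, by fun_prop, C, fun x y hy => by
    refine le_trans ?_ (hC x y hy)
    rw [abs_of_nonneg (le_max_right _ _)]
    exact max_le (le_abs_self _) (abs_nonneg _)⟩
  let cn : VK K := ⟨fun p => max (-c.1 p) 0, by fun_prop, C, fun x y hy => by
    refine le_trans ?_ (hC x y hy)
    rw [abs_of_nonneg (le_max_right _ _)]
    exact max_le (neg_le_abs _) (abs_nonneg _)⟩
  have hcp0 : ∀ p, 0 ≤ cp.1 p := fun p => le_max_right _ _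
  have hcn0 : ∀ p, 0 ≤ cn.1 p := fun p => le_max_right _ _
  have hp := hπ cp hcp0
  have hn := hπ cn hcn0
  have ip : Integrable cp.1 π := ⟨cp.2.1.aestronglyMeasurable, by
    rw [hasFiniteIntegral_iff_ofReal (ae_of_all _ hcp0), hp]; exact ENNReal.ofReal_lt_top⟩
  have iN : Integrable cn.1 π := ⟨cn.2.1.aestronglyMeasurable, by
    rw [hasFiniteIntegral_iff_ofReal (ae_of_all _ hcn0), hn]; exact ENNReal.ofReal_lt_top⟩
  have ep : ∫ p, cp.1 p ∂π = L cp := by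
    rw [integral_eq_lintegral_of_nonneg_ae (ae_of_all _ hcp0) ip.1, hp,
      ENNReal.toReal_ofReal (hpos _ hcp0)]
  have en : ∫ p, cn.1 p ∂π = L cn := by
    rw [integral_eq_lintegral_of_nonneg_ae (ae_of_all _ hcn0) iN.1, hn,
      ENNReal.toReal_ofReal (hpos _ hcn0)]
  have hcc : c = cp - cn := by
    ext p
    change c.1 p = max (c.1 p) 0 - max (-c.1 p) 0
    rcases le_total (c.1 p) 0 with h | h
    · rw [max_eq_right h, max_eq_left (by linarith)]; ring
    · rw [max_eq_left h, max_eq_right (by linarith)]; ring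
  have e1 : L c = L cp - L cn := by
    rw [← map_sub, ← hcc]
  have e2 : ∫ p, c.1 p ∂π = ∫ p, (cp.1 p - cn.1 p) ∂π := by
    refine integral_congr_ae (ae_of_all _ fun p => ?_)
    have := congrArg (fun v : VK K => v.1 p) hcc
    exact this
  rw [e1, e2, integral_sub ip iN, ep, en]

lemma aux_dual (hK : IsCompact K) (hK0 : K.Nonempty) {ν ρ : Measure E} [IsProbabilityMeasure ν]
    [IsProbabilityMeasure ρ] (hν : Integrable (fun x => ‖x‖) ν) (hρ : ∀ᵐ y ∂ρ, y ∈ K) (c : VK K) :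
    ∃ π : Measure (E × E), π.map Prod.fst = ν ∧ π.map Prod.snd = ρ ∧
      ∫ p, c.1 p ∂π = dualQ ν ρ c := by
  obtain ⟨L, hLc, hLP, hpos, hu, hg⟩ := aux_L1 hK hK0 hν hρ c
  obtain ⟨π, hπ⟩ := aux_rmk hK hK0 hν L hLP
  have conv : ∀ (α : Measure E) [IsProbabilityMeasure α] (u : E →ᵇ ℝ≥0),
      ∃ v : E →ᵇ ℝ, (∀ x, v x = u x) ∧ ENNReal.ofReal (∫ x, v x ∂α) = ∫⁻ x, u x ∂α := by
    intro α _ u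
    refine ⟨⟨⟨fun x => (u x : ℝ), by fun_prop⟩, u.map_bounded'⟩, fun x => rfl, ?_⟩
    rw [ofReal_integral_eq_lintegral_ofReal]
    · exact lintegral_congr fun x => ENNReal.ofReal_coe_nnreal
    · exact BoundedContinuousFunction.integrable α _
    · exact ae_of_all _ fun x => NNReal.coe_nonneg _
  refine ⟨π, ?_, ?_, ?_⟩
  · symm
    apply ext_of_forall_lintegral_eq_of_IsFiniteMeasure
    intro u
    obtain ⟨v, hv, hv'⟩ := conv ν u
    rw [lintegral_map (by fun_prop) measurable_fst, ← hv', ← hu, ← hπ]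
    · refine lintegral_congr fun p => ?_
      change ENNReal.ofReal (v p.1) = _
      rw [hv]; simp
    · intro p
      change 0 ≤ v p.1
      rw [hv]; simp
  · symm
    apply ext_of_forall_lintegral_eq_of_IsFiniteMeasure
    intro u
    obtain ⟨v, hv, hv'⟩ := conv ρ u
    rw [lintegral_map (by fun_prop) measurable_snd, ← hv', ← hg, ← hπ]
    · refine lintegral_congr fun p => ?_
      change ENNReal.ofReal (v p.2) = _
      rw [hv]; simp
    · intro p
      change 0 ≤ v p.2
      rw [hv]; simp
  · rw [← hLc]
    exact aux_repr L hpos hπ c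

/-- Measurable argmax over a finite set. -/
lemma aux_argmax (c : E → ℝ) (S : Finset E) (hS : S.Nonempty) :
    ∃ T : E → E, Measurable T ∧ ∀ x, T x ∈ S ∧ ∀ a ∈ S, ⟪x, a⟫ + c a ≤ ⟪x, T x⟫ + c (T x) := by
  classical
  have key : ∀ S : Finset E, S.Nonempty → ∃ (T : E → E) (m : E → ℝ), Measurable T ∧ Measurable m ∧
      (∀ x, m x = ⟪x, T x⟫ + c (T x)) ∧
      ∀ x, T x ∈ S ∧ ∀ a ∈ S, ⟪x, a⟫ + c a ≤ m x := by
    intro S hS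
    induction hS using Finset.Nonempty.cons_induction with
    | singleton a =>
      exact ⟨fun _ => a, fun x => ⟪x, a⟫ + c a, measurable_const, by fun_prop, fun x => rfl, by simp⟩
    | cons a s ha hs ih =>
      obtain ⟨T, m, hT, hm, e, h⟩ := ih
      have hms : MeasurableSet {x | m x ≤ ⟪x, a⟫ + c a} := measurableSet_le hm (by fun_prop)
      refine ⟨fun x => if m x ≤ ⟪x, a⟫ + c a then a else T x,
        fun x => if m x ≤ ⟪x, a⟫ + c a then ⟪x, a⟫ + c a else m x,
        Measurable.ite hms measurable_const hT, Measurable.ite hms (by fun_prop) hm,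
        fun x => ?_, fun x => ?_⟩
      · beta_reduce
        split_ifs
        · rfl
        · exact e x
      · beta_reduce
        split_ifs with hx
        · refine ⟨by simp, fun b hb => ?_⟩
          rcases Finset.mem_cons.1 hb with rfl | hb
          · exact le_rfl
          · exact ((h x).2 b hb).trans hx
        · refine ⟨by simp [(h x).1], fun b hb => ?_⟩
          rcases Finset.mem_cons.1 hb with rfl | hb
          · exact (not_le.1 hx).le
          · exact (h x).2 b hb
  obtain ⟨T, m, hT, hm, e, h⟩ := key S hS
  exact ⟨T, hT, fun x => ⟨(h x).1, fun a ha => (e x) ▸ (h x).2 a ha⟩⟩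

/-- Countably many affine minorants with slope-determined offsets. -/
lemma aux_affine {f : E → ℝ} (hf : ConvexOn ℝ Set.univ f) :
    ∃ (a : ℕ → E) (c : E → ℝ), (∀ i x, ⟪x, a i⟫ + c (a i) ≤ f x) ∧
      ∀ x (r : ℝ), r < f x → ∃ i, r < ⟪x, a i⟫ + c (a i) := by
  have hcont : Continuous f := hf.locallyLipschitz.continuous
  obtain ⟨l, b, hle, hsup⟩ := hf.real_univ_sSup_of_nat_affine_eq hcont.lowerSemicontinuous
  let a : ℕ → E := fun i => (InnerProductSpace.toDual ℝ E).symm (l i)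
  have ha : ∀ i x, ⟪x, a i⟫ = l i x := fun i x => by
    rw [real_inner_comm]; simp [a]
  have hle' : ∀ i x, ⟪x, a i⟫ + b i ≤ f x := fun i x => by
    rw [ha]; exact hle i x
  have hbdd : ∀ i, BddBelow (Set.range fun x => f x - ⟪x, a i⟫) := fun i =>
    ⟨b i, by rintro _ ⟨x, rfl⟩; have := hle' i x; simp only; linarith⟩
  refine ⟨a, fun y => ⨅ x, (f x - ⟪x, y⟫), fun i x => ?_, fun x r hr => ?_⟩
  · have := ciInf_le (hbdd i) x
    simp only at this ⊢
    linarith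
  · have e := congrFun hsup x
    rw [iSup_apply] at e
    rw [← e] at hr
    obtain ⟨i, hi⟩ := exists_lt_of_lt_ciSup hr
    refine ⟨i, hi.trans_le ?_⟩
    have : b i ≤ ⨅ x, (f x - ⟪x, a i⟫) := le_ciInf fun x => by linarith [hle' i x]
    change l i x + b i ≤ _
    rw [ha]
    simp only
    linarith

end Generic

section Final
open scoped BoundedContinuousFunction NNReal ENNReal
open Filter Topology

variable {d : ℕ}

lemma OT_le {α ρ : Measure (EuclideanSpace ℝ (Fin d))} [IsProbabilityMeasure α]
    [IsProbabilityMeasure ρ] (hα : Integrable (fun x => ‖x‖) α) {R : ℝ} (hρ : ∀ᵐ y ∂ρ, ‖y‖ ≤ R)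
    {f g : EuclideanSpace ℝ (Fin d) → ℝ} (hf : Integrable f α) (hg : Integrable g ρ)
    (h : ∀ᵐ y ∂ρ, ∀ x, ⟪x, y⟫ ≤ f x - g y) :
    OTcost α ρ ≤ ∫ x, f x ∂α - ∫ y, g y ∂ρ := by
  refine csSup_le ⟨_, α.prod ρ, ⟨?_, ?_⟩, rfl⟩ ?_
  · simp
  · simp
  · rintro _ ⟨π, ⟨h1, h2⟩, rfl⟩
    exact aux_pair_le h1 h2 hα hρ hf hg h

lemma le_OT {α ρ : Measure (EuclideanSpace ℝ (Fin d))}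
    (hα : Integrable (fun x => ‖x‖) α) {R : ℝ} (hρ : ∀ᵐ y ∂ρ, ‖y‖ ≤ R)
    {π : Measure (EuclideanSpace ℝ (Fin d) × EuclideanSpace ℝ (Fin d))}
    (h1 : π.map Prod.fst = α) (h2 : π.map Prod.snd = ρ) :
    ∫ p, ⟪p.1, p.2⟫ ∂π ≤ OTcost α ρ := by
  refine le_csSup ⟨∫ x, ‖x‖ * R ∂α - ∫ y, (0 : ℝ) ∂ρ, ?_⟩ ⟨π, ⟨h1, h2⟩, rfl⟩
  rintro _ ⟨π, ⟨h1, h2⟩, rfl⟩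
  refine aux_pair_le (g := fun _ => 0) h1 h2 hα hρ (hα.mul_const R) (integrable_zero _ _ _) ?_
  filter_upwards [hρ] with y hy x
  rw [sub_zero]
  refine (real_inner_le_norm _ _).trans ?_
  gcongr

lemma dirA {μ ν : Measure (EuclideanSpace ℝ (Fin d))}
    [IsProbabilityMeasure μ] [IsProbabilityMeasure ν]
    (hμ : Integrable (fun x => ‖x‖) μ) (hν : Integrable (fun y => ‖y‖) ν)
    (ρ : Measure (EuclideanSpace ℝ (Fin d))) [IsProbabilityMeasure ρ] {R : ℝ}
    (hR : ρ (closedBall (0 : EuclideanSpace ℝ (Fin d)) R)ᶜ = 0) {ε : ℝ} (hε : 0 < ε) :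
    ∃ f : EuclideanSpace ℝ (Fin d) → ℝ, ConvexOn ℝ Set.univ f ∧ Integrable f μ ∧ Integrable f ν ∧
      ∫ x, f x ∂ν - ∫ x, f x ∂μ ≤ OTcost ν ρ - OTcost μ ρ + ε := by
  set K := closedBall (0 : EuclideanSpace ℝ (Fin d)) R with hKdef
  have hK : IsCompact K := isCompact_closedBall _ _
  have hρ : ∀ᵐ y ∂ρ, y ∈ K := hR
  have hρ' : ∀ᵐ y ∂ρ, ‖y‖ ≤ R := by
    filter_upwards [hρ] with y hy
    simpa [K] using hy
  have hK0 : K.Nonempty := by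
    obtain ⟨y, hy⟩ := hρ.exists
    exact ⟨y, hy⟩
  let c : VK K := ⟨fun p => ⟪p.1, p.2⟫, by fun_prop, R, fun x y hy => by
    have hy' : ‖y‖ ≤ R := by simpa [K] using hy
    have := abs_real_inner_le_norm x y
    have h0 := norm_nonneg x
    have h1 := norm_nonneg y
    simp only
    nlinarith⟩
  obtain ⟨π, h1, h2, h3⟩ := aux_dual hK hK0 hν hρ c
  have hC := le_OT hν hρ' h1 h2
  have hlt : dualQ ν ρ c < OTcost ν ρ + ε := by
    rw [← h3]
    change ∫ p, ⟪p.1, p.2⟫ ∂π < _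
    linarith
  obtain ⟨g, hg⟩ := exists_lt_of_ciInf_lt hlt
  unfold dualJ at hg
  set F : VK K := c + sndV K g with hF
  have hFx : ∀ x y, F.1 (x, y) = ⟪x, y⟫ + g y := fun x y => rfl
  refine ⟨supK K F.1, ⟨convex_univ, ?_⟩, supK_int hK hK0 hμ F.2, supK_int hK hK0 hν F.2, ?_⟩
  · intro x _ x' _ s t hs ht hst
    refine supK_le hK0 _ fun y hy => ?_
    have a1 := mul_le_mul_of_nonneg_left (le_supK hK F.2.1 x hy) hs
    have a2 := mul_le_mul_of_nonneg_left (le_supK hK F.2.1 x' hy) ht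
    rw [hFx] at a1 a2 ⊢
    rw [inner_add_left, real_inner_smul_left, real_inner_smul_left]
    simp only [smul_eq_mul]
    have : g y = s * g y + t * g y := by rw [← add_mul, hst, one_mul]
    linarith
  · have := OT_le hμ hρ' (supK_int hK hK0 hμ F.2) (g.integrable ρ) (by
      filter_upwards [hρ] with y hy x
      have := le_supK hK F.2.1 x hy
      rw [hFx] at this
      linarith)
    linarith

lemma dirB {μ ν : Measure (EuclideanSpace ℝ (Fin d))}
    [IsProbabilityMeasure μ] [IsProbabilityMeasure ν]
    (hμ : Integrable (fun x => ‖x‖) μ) (hν : Integrable (fun y => ‖y‖) ν)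
    (c : EuclideanSpace ℝ (Fin d) → ℝ) (S : Finset (EuclideanSpace ℝ (Fin d))) (hS : S.Nonempty) :
    ∃ ρ : Measure (EuclideanSpace ℝ (Fin d)), IsProbabilityMeasure ρ ∧
        (∃ R : ℝ, ρ (closedBall (0 : EuclideanSpace ℝ (Fin d)) R)ᶜ = 0) ∧
      OTcost ν ρ - OTcost μ ρ ≤ ∫ x, S.sup' hS (fun a => ⟪x, a⟫ + c a) ∂ν -
        ∫ x, S.sup' hS (fun a => ⟪x, a⟫ + c a) ∂μ := by
  classical
  obtain ⟨T, hT, hTS⟩ := aux_argmax c S hS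
  have hF : ∀ x, S.sup' hS (fun a => ⟪x, a⟫ + c a) = ⟪x, T x⟫ + c (T x) := fun x =>
    le_antisymm (Finset.sup'_le _ _ (hTS x).2) (Finset.le_sup' (fun a => ⟪x, a⟫ + c a) (hTS x).1)
  have hprob : IsProbabilityMeasure (μ.map T) := Measure.isProbabilityMeasure_map hT.aemeasurable
  obtain ⟨R, hR⟩ : ∃ R : ℝ, ∀ a ∈ S, ‖a‖ ≤ R := S.finite_toSet.isBounded.exists_norm_le
  obtain ⟨B, hB⟩ : ∃ B : ℝ, ∀ a ∈ S, ‖c a‖ ≤ B := by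
    obtain ⟨B, hB⟩ := (S.image c).finite_toSet.isBounded.exists_norm_le
    exact ⟨B, fun a ha => hB _ (by simpa using ⟨a, ha, rfl⟩)⟩
  have hSm : MeasurableSet (S : Set (EuclideanSpace ℝ (Fin d))) := S.measurableSet
  have hSae : ∀ᵐ y ∂(μ.map T), y ∈ S :=
    (ae_map_iff hT.aemeasurable hSm).2 (ae_of_all _ fun x => (hTS x).1)
  have hRae : ∀ᵐ y ∂(μ.map T), ‖y‖ ≤ R := hSae.mono hR
  let g : EuclideanSpace ℝ (Fin d) → ℝ := fun y => if y ∈ S then c y else 0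
  have hgm : Measurable g := by
    refine (measurable_zero (α := ℝ)).measurable_of_countable_ne (S.countable_toSet.mono ?_)
    intro y hy
    by_contra hy'
    exact hy (by simp at hy'; simp [g, hy'])
  have hgi : Integrable g (μ.map T) := by
    refine Integrable.of_bound hgm.aestronglyMeasurable B ?_
    filter_upwards [hSae] with y hy
    simp only [g, hy, if_true]
    exact hB y hy
  have hFi : ∀ (α : Measure (EuclideanSpace ℝ (Fin d))) [IsProbabilityMeasure α],
      Integrable (fun x => ‖x‖) α →
      Integrable (fun x => S.sup' hS (fun a => ⟪x, a⟫ + c a)) α := by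
    intro α _ hα
    simp only [hF]
    have hcT : Measurable fun x => c (T x) := by
      have : (fun x => c (T x)) = fun x => g (T x) := by
        funext x; simp [g, (hTS x).1]
      rw [this]; exact hgm.comp hT
    refine Integrable.add ?_ ?_
    · refine (hα.mul_const R).mono' (by fun_prop) (ae_of_all _ fun x => ?_)
      refine (norm_inner_le_norm _ _).trans ?_
      have := hR _ (hTS x).1
      gcongr
    · exact Integrable.of_bound hcT.aestronglyMeasurable B (ae_of_all _ fun x => hB _ (hTS x).1)
  refine ⟨μ.map T, hprob, ⟨R, ?_⟩, ?_⟩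
  · have : ∀ᵐ y ∂(μ.map T), y ∈ closedBall (0 : EuclideanSpace ℝ (Fin d)) R :=
      hRae.mono fun y hy => by simpa using hy
    exact this
  · have h1 := OT_le hν hRae (hFi ν hν) hgi (by
      filter_upwards [hSae] with y hy x
      have := Finset.le_sup' (fun a => ⟪x, a⟫ + c a) hy
      simp only [g, hy, if_true]
      linarith)
    have hm : Measurable fun x => (x, T x) := measurable_id.prodMk hT
    have h2 := le_OT (π := μ.map fun x => (x, T x)) hμ hRae
      (by rw [Measure.map_map measurable_fst hm]; exact Measure.map_id)
      (by rw [Measure.map_map measurable_snd hm]; rfl)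
    rw [integral_map hm.aemeasurable (by fun_prop)] at h2
    have h3 : ∫ x, ⟪x, T x⟫ ∂μ = ∫ x, S.sup' hS (fun a => ⟪x, a⟫ + c a) ∂μ - ∫ y, g y ∂(μ.map T) := by
      rw [integral_map hT.aemeasurable hgm.aestronglyMeasurable,
        ← integral_sub (hFi μ hμ) (show Integrable (fun x => g (T x)) μ from hgi.comp_measurable hT)]
      refine integral_congr_ae (ae_of_all _ fun x => ?_)
      simp only [hF, g, (hTS x).1, if_true]
      ring
    simp only at h2
    linarith

lemma dirB' {μ ν : Measure (EuclideanSpace ℝ (Fin d))}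
    [IsProbabilityMeasure μ] [IsProbabilityMeasure ν]
    (hμ : Integrable (fun x => ‖x‖) μ) (hν : Integrable (fun y => ‖y‖) ν)
    {f : EuclideanSpace ℝ (Fin d) → ℝ} (hf : ConvexOn ℝ Set.univ f) (hfμ : Integrable f μ)
    (hfν : Integrable f ν) :
    ∃ r : ℕ → ℝ, Tendsto r atTop (𝓝 (∫ x, f x ∂ν - ∫ x, f x ∂μ)) ∧
      ∀ n, ∃ ρ : Measure (EuclideanSpace ℝ (Fin d)), IsProbabilityMeasure ρ ∧
        (∃ R : ℝ, ρ (closedBall (0 : EuclideanSpace ℝ (Fin d)) R)ᶜ = 0) ∧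
        OTcost ν ρ - OTcost μ ρ ≤ r n := by
  classical
  obtain ⟨a, c, hle, hsup⟩ := aux_affine hf
  let S : ℕ → Finset (EuclideanSpace ℝ (Fin d)) := fun n => (Finset.range (n + 1)).image a
  have hmem : ∀ i n, i ≤ n → a i ∈ S n := fun i n h =>
    Finset.mem_image_of_mem _ (Finset.mem_range.2 (by omega))
  have hS : ∀ n, (S n).Nonempty := fun n => ⟨_, hmem 0 n (by omega)⟩
  let F : ℕ → EuclideanSpace ℝ (Fin d) → ℝ := fun n x => (S n).sup' (hS n) (fun a => ⟪x, a⟫ + c a)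
  have hFlow : ∀ i n x, i ≤ n → ⟪x, a i⟫ + c (a i) ≤ F n x := fun i n x h =>
    Finset.le_sup' (fun a => ⟪x, a⟫ + c a) (hmem i n h)
  have hFup : ∀ n x, F n x ≤ f x := fun n x => by
    refine Finset.sup'_le _ _ fun b hb => ?_
    obtain ⟨i, -, rfl⟩ := Finset.mem_image.1 hb
    exact hle i x
  have hFc : ∀ n, Continuous (F n) := fun n =>
    Continuous.finset_sup'_apply (hS n) fun b _ => by fun_prop
  have hlim : ∀ x, Tendsto (fun n => F n x) atTop (𝓝 (f x)) := by
    intro x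
    refine tendsto_order.2 ⟨fun r hr => ?_, fun r hr => ?_⟩
    · obtain ⟨i, hi⟩ := hsup x r hr
      filter_upwards [eventually_ge_atTop i] with n hn
      exact hi.trans_le (hFlow i n x hn)
    · exact Eventually.of_forall fun n => (hFup n x).trans_lt hr
  have hconvF : ∀ (α : Measure (EuclideanSpace ℝ (Fin d))) [IsProbabilityMeasure α],
      Integrable (fun x => ‖x‖) α → Integrable f α →
      Tendsto (fun n => ∫ x, F n x ∂α) atTop (𝓝 (∫ x, f x ∂α)) := by
    intro α _ hα hfα
    have hb : Integrable (fun x => |f x| + (‖x‖ * ‖a 0‖ + |c (a 0)|)) α :=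
      hfα.abs.add ((hα.mul_const _).add (integrable_const _))
    refine tendsto_integral_of_dominated_convergence _
      (fun n => (hFc n).aestronglyMeasurable) hb (fun n => ae_of_all _ fun x => ?_)
      (ae_of_all _ hlim)
    rw [Real.norm_eq_abs]
    have h1 := hFlow 0 n x (by omega)
    have h2 := hFup n x
    have h3 := (abs_le.1 (abs_real_inner_le_norm x (a 0))).1
    have h4 := neg_abs_le (c (a 0))
    have h5 := le_abs_self (f x)
    have h6 := abs_nonneg (f x)
    have h7 := abs_nonneg (c (a 0))
    have h8 : 0 ≤ ‖x‖ * ‖a 0‖ := by positivity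
    exact abs_le.2 ⟨by linarith, by linarith⟩
  exact ⟨fun n => ∫ x, F n x ∂ν - ∫ x, F n x ∂μ, (hconvF ν hν hfν).sub (hconvF μ hμ hfμ),
    fun n => dirB hμ hν c (S n) (hS n)⟩

end Final

theorem stmt9 (d : ℕ) (hd : 1 ≤ d)
    (μ ν : Measure (EuclideanSpace ℝ (Fin d)))
    [IsProbabilityMeasure μ] [IsProbabilityMeasure ν]
    (hμ : Integrable (fun x => ‖x‖) μ) (hν : Integrable (fun y => ‖y‖) ν) :
    sInf {r : EReal | ∃ f : EuclideanSpace ℝ (Fin d) → ℝ,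
        ConvexOn ℝ Set.univ f ∧ Integrable f μ ∧ Integrable f ν ∧
        r = ((∫ x, f x ∂ν - ∫ x, f x ∂μ : ℝ) : EReal)}
      = sInf {r : EReal | ∃ ρ : Measure (EuclideanSpace ℝ (Fin d)),
        IsProbabilityMeasure ρ ∧
        (∃ R : ℝ, ρ (closedBall (0 : EuclideanSpace ℝ (Fin d)) R)ᶜ = 0) ∧
        r = ((OTcost ν ρ - OTcost μ ρ : ℝ) : EReal)} := by
  refine le_antisymm (le_sInf ?_) (le_sInf ?_)
  · rintro _ ⟨ρ, hρ, ⟨R, hR⟩, rfl⟩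
    refine EReal.le_of_forall_lt_iff_le.1 fun z hz => ?_
    have hz' := EReal.coe_lt_coe_iff.1 hz
    obtain ⟨f, h1, h2, h3, h4⟩ := dirA hμ hν ρ hR (sub_pos.2 hz')
    refine le_trans (sInf_le ⟨f, h1, h2, h3, rfl⟩) (EReal.coe_le_coe_iff.2 ?_)
    linarith
  · rintro _ ⟨f, h1, h2, h3, rfl⟩
    obtain ⟨r, hr, hr'⟩ := dirB' hμ hν h1 h2 h3
    refine ge_of_tendsto' (continuous_coe_real_ereal.continuousAt.tendsto.comp hr) fun n => ?_
    obtain ⟨ρ, p1, p2, p3⟩ := hr' n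
    exact le_trans (sInf_le ⟨ρ, p1, p2, rfl⟩) (EReal.coe_le_coe_iff.2 p3)
end
end
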